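/- arXiv:1003.3075 — 3 statements merged into one kernel-verified Lean document; each statement's English description precedes it below -/
import Mathlib

section
/- For all positive integers p and s, the Fuss-Catalan number FC^(s)_p = (1/(sp+1)) * binomial(sp+p, p) equals the number of s-chains in the lattice of non-crossing partitions of [p], i.e. the number of tuples (σ₁, ..., σ_s) of non-crossing partitions of {1,...,p} with σ₁ ≤ σ₂ ≤ ... ≤ σ_s in the refinement order. -/
open Equiv Finset MeasureTheory

/-- A finpartition of `Fin n` is non-crossing if there are no `a < b < c < d` with
`a, c` in one block and `b, d` in another, distinct block. -/
def IsNonCrossing {n : ℕ} (P : Finpartition (Finset.univ : Finset (Fin n))) : Prop :=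
  ¬ ∃ (a b c d : Fin n) (X Y : Finset (Fin n)), X ∈ P.parts ∧ Y ∈ P.parts ∧ X ≠ Y ∧
      a < b ∧ b < c ∧ c < d ∧ a ∈ X ∧ c ∈ X ∧ b ∈ Y ∧ d ∈ Y

/-- The minimal number of transpositions whose product is `σ`. -/
noncomputable def permLength {n : ℕ} (σ : Equiv.Perm (Fin n)) : ℕ :=
  sInf {k | ∃ l : List (Equiv.Perm (Fin n)), (∀ τ ∈ l, τ.IsSwap) ∧ l.prod = σ ∧ l.length = k}

/-- The number of cycles of `σ`, counting fixed points as cycles (= number of orbits). -/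
def cycleCount {n : ℕ} (σ : Equiv.Perm (Fin n)) : ℕ :=
  Multiset.card σ.cycleType + (n - σ.support.card)

/-- The lattice of non-crossing partitions of `{1,…,p}`. -/
abbrev NCP (p : ℕ) := {P : Finpartition (Finset.univ : Finset (Fin p)) // IsNonCrossing P}


structure IsCh (s n : ℕ) (M : ℕ → ℕ → ℕ) : Prop where
  h0 : ∀ x, M 0 x = x
  hout : ∀ i x, n ≤ x → M i x = x
  hle : ∀ i x, x ≤ M i x
  hlt : ∀ i x, x < n → M i x < n
  hnest : ∀ i x y, x ≤ y → y ≤ M i x → M i y ≤ M i x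
  hcomp : ∀ i i' x, i ≤ i' → M i' (M i x) = M i' x
  htop : ∀ i x, s < i → x < n → M i x + 1 = n

abbrev ZT (s n : ℕ) := {M : ℕ → ℕ → ℕ // IsCh s n M}
abbrev BT (s k m : ℕ) := {M : ℕ → ℕ → ℕ // IsCh s (m + 1) M ∧ M k 0 = m}

def spL (j : ℕ) (M : ℕ → ℕ → ℕ) : ℕ → ℕ → ℕ := fun i x => if x ≤ j then min (M i x) j else x
def spR (j : ℕ) (M : ℕ → ℕ → ℕ) : ℕ → ℕ → ℕ := fun i x => M i (x + j + 1) - (j + 1)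
def glue (k j q : ℕ) (A B : ℕ → ℕ → ℕ) : ℕ → ℕ → ℕ := fun i x =>
  if x ≤ j then (if k < i ∧ A i x = j then j + q else A i x) else B i (x - (j + 1)) + (j + 1)

lemma spL_ch {s j q : ℕ} {M} (h : IsCh s (j + q + 1) M) : IsCh s (j + 1) (spL j M) := by
  obtain ⟨h0, hout, hle, hlt, hnest, hcomp, htop⟩ := h
  constructor
  · intro x; simp only [spL, h0]; split_ifs <;> omega
  · intro i x hx; simp only [spL]; split_ifs <;> omega
  · intro i x; have := hle i x; simp only [spL]; split_ifs <;> omega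
  · intro i x hx; simp only [spL]; split_ifs <;> omega
  · intro i x y hxy; have := hnest i x y hxy; simp only [spL]; split_ifs <;> omega
  · intro i i' x hi
    have h1 := hcomp i i' x hi
    have h2 := hle i' (M i x)
    have h3 := hle i' j
    simp only [spL]
    by_cases hx : x ≤ j
    · simp only [hx, if_true]
      rw [if_pos (min_le_right _ _)]
      rcases le_total (M i x) j with h | h
      · rw [min_eq_left h, h1]
      · rw [min_eq_right h]; omega
    · simp [hx]
  · intro i x hi hx
    have := htop i x hi (by omega)
    simp only [spL]; split_ifs <;> omega

lemma spR_ch {s j q : ℕ} {M} (h : IsCh s (j + q + 1) M) : IsCh s q (spR j M) := by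
  obtain ⟨h0, hout, hle, hlt, hnest, hcomp, htop⟩ := h
  constructor
  · intro x; simp only [spR, h0]; omega
  · intro i x hx; simp only [spR]; rw [hout _ _ (by omega)]; omega
  · intro i x; have := hle i (x + j + 1); simp only [spR]; omega
  · intro i x hx; have := hlt i (x + j + 1) (by omega); have := hle i (x + j + 1); simp only [spR]; omega
  · intro i x y hxy hy
    have := hnest i (x + j + 1) (y + j + 1) (by omega)
    have := hle i (x + j + 1)
    simp only [spR] at *; omega
  · intro i i' x hi
    have h1 := hcomp i i' (x + j + 1) hi
    have h2 := hle i (x + j + 1)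
    simp only [spR]
    rw [show M i (x + j + 1) - (j + 1) + j + 1 = M i (x + j + 1) by omega, h1]
  · intro i x hi hx
    have := htop i (x + j + 1) hi (by omega)
    simp only [spR]; omega

lemma glue_ch {s k j q : ℕ} {A B} (hk : k ≤ s) (hA : IsCh s (j + 1) A)
    (hB : IsCh s q B) : IsCh s (j + q + 1) (glue k j q A B) := by
  obtain ⟨h0, hout, hle, hlt, hnest, hcomp, htop⟩ := hA
  obtain ⟨g0, gout, gle, glt, gnest, gcomp, gtop⟩ := hB
  constructor
  · intro x; simp only [glue, h0, g0]; split_ifs <;> omega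
  · intro i x hx; simp only [glue]; rw [gout _ _ (by omega), if_neg (by omega)]; omega
  · intro i x; have := hle i x; have := gle i (x - (j + 1)); simp only [glue]; split_ifs <;> omega
  · intro i x hx
    have := hlt i x
    have h2 := glt i (x - (j + 1))
    simp only [glue]; split_ifs <;> omega
  · intro i x y hxy
    have := hnest i x y hxy
    have := hlt i x
    have := hlt i y
    have := gnest i (x - (j + 1)) (y - (j + 1)) (by omega)
    have := glt i (y - (j + 1))
    simp only [glue]; split_ifs <;> omega
  · intro i i' x hi
    by_cases hx : x ≤ j
    · have hAx : A i x < j + 1 := hlt i x (by omega)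
      have hc := hcomp i i' x hi
      by_cases hh : k < i ∧ A i x = j
      · have e1 : glue k j q A B i x = j + q := by simp only [glue]; rw [if_pos hx, if_pos hh]
        have hj : A i' j = j := by
          have := hle i' j; have := hlt i' j (by omega); omega
        have e2 : glue k j q A B i' x = j + q := by
          simp only [glue]; rw [if_pos hx, if_pos ⟨by omega, by rw [← hc, hh.2, hj]⟩]
        rw [e1, e2]
        rcases Nat.eq_zero_or_pos q with h | h
        · simp only [glue]; subst h; simp only [add_zero, le_refl, if_true, hj]; simp
        · simp only [glue]
          rw [if_neg (by omega)]
          have := gle i' (j + q - (j + 1))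
          have := glt i' (j + q - (j + 1)) (by omega)
          omega
      · have e1 : glue k j q A B i x = A i x := by simp only [glue]; rw [if_pos hx, if_neg hh]
        rw [e1]
        simp only [glue]
        rw [if_pos (by omega), if_pos hx, hc]
    · have e1 : glue k j q A B i x = B i (x - (j + 1)) + (j + 1) := by
        simp only [glue]; rw [if_neg hx]
      rw [e1]
      simp only [glue]
      rw [if_neg (by omega), if_neg hx, Nat.add_sub_cancel, gcomp i i' _ hi]
  · intro i x hi hx
    have := htop i x hi
    have := gtop i (x - (j + 1)) hi
    simp only [glue]; split_ifs <;> omega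

lemma glue_top {s k j q : ℕ} {A B} (hA : IsCh s (j + 1) A) (hAk : A k 0 = j) :
    glue k j q A B (k + 1) 0 = j + q ∧ glue k j q A B k 0 = j := by
  have h1 := hA.hcomp k (k + 1) 0 (by omega)
  rw [hAk] at h1
  have h2 := hA.hle (k + 1) j
  have h3 := hA.hlt (k + 1) j (by omega)
  simp only [glue]
  constructor
  · rw [if_pos (by omega), if_pos ⟨by omega, by omega⟩]
  · rw [if_pos (by omega), if_neg (by omega), hAk]

lemma spL_glue {s k j q : ℕ} {A B} (hA : IsCh s (j + 1) A) : spL j (glue k j q A B) = A := by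
  funext i x
  have h1 := hA.hlt i x
  have h2 := hA.hout i x
  simp only [spL, glue]; split_ifs <;> omega

lemma spR_glue {k j q : ℕ} {A B} : spR j (glue k j q A B) = B := by
  funext i x
  simp only [spR, glue]
  rw [if_neg (by omega), show x + j + 1 - (j + 1) = x by omega]; omega

lemma glue_sp {s k j q : ℕ} {M} (h : IsCh s (j + q + 1) M) (h1 : M (k + 1) 0 = j + q)
    (h2 : M k 0 = j) : glue k j q (spL j M) (spR j M) = M := by
  funext i x
  by_cases hx : x ≤ j
  · have e0 : spL j M i x = min (M i x) j := by simp only [spL]; rw [if_pos hx]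
    unfold glue
    rw [if_pos hx, e0]
    by_cases hi : k < i
    · have e1 := h.hcomp (k + 1) i 0 (by omega)
      have e2 := h.hcomp k i 0 (by omega)
      rw [h1] at e1
      rw [h2] at e2
      have e3 := h.hle i (j + q)
      have e4 := h.hlt i x (by omega)
      have e5 := h.hnest i x j hx
      split_ifs <;> omega
    · have e1 := h.hnest k 0 x (by omega) (by omega)
      have e2 := h.hcomp i k x (by omega)
      have e3 := h.hle k (M i x)
      split_ifs <;> omega
  · simp only [glue, spR]
    rw [if_neg hx]
    have := h.hle i x
    rw [show x - (j + 1) + j + 1 = x by omega]; omega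

lemma spL_k {k j : ℕ} {M : ℕ → ℕ → ℕ} (h : M k 0 = j) : spL j M k 0 = j := by simp [spL, h]

def splitEquiv (s k p : ℕ) (hk : k ≤ s) :
    BT s (k + 1) p ≃ Σ ij : antidiagonal p, BT s k ij.1.1 × ZT s ij.1.2 where
  toFun M := ⟨⟨(M.1 k 0, p - M.1 k 0), by
      have := M.2.1.hlt k 0 (by omega); simp; omega⟩,
    ⟨spL (M.1 k 0) M.1, spL_ch (q := p - M.1 k 0) (by
      have := M.2.1.hlt k 0 (by omega)
      rw [show M.1 k 0 + (p - M.1 k 0) + 1 = p + 1 by omega]; exact M.2.1), spL_k rfl⟩,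
    ⟨spR (M.1 k 0) M.1, spR_ch (by
      have := M.2.1.hlt k 0 (by omega)
      show IsCh s (M.1 k 0 + (p - M.1 k 0) + 1) M.1
      rw [show M.1 k 0 + (p - M.1 k 0) + 1 = p + 1 by omega]; exact M.2.1)⟩⟩
  invFun T := ⟨glue k T.1.1.1 T.1.1.2 T.2.1.1 T.2.2.1, by
      have e : T.1.1.1 + T.1.1.2 = p := mem_antidiagonal.1 T.1.2
      have h1 := glue_ch hk T.2.1.2.1 T.2.2.2
      have h2 := (glue_top (q := T.1.1.2) (B := T.2.2.1) T.2.1.2.1 T.2.1.2.2).1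
      refine ⟨?_, h2.trans e⟩
      rw [show p + 1 = T.1.1.1 + T.1.1.2 + 1 by omega]; exact h1⟩
  left_inv M := by
    have := M.2.1.hlt k 0 (by omega)
    apply Subtype.ext
    refine glue_sp (s := s) ?_ ?_ rfl
    · show IsCh s (M.1 k 0 + (p - M.1 k 0) + 1) M.1
      rw [show M.1 k 0 + (p - M.1 k 0) + 1 = p + 1 by omega]; exact M.2.1
    · show _ = M.1 k 0 + (p - M.1 k 0)
      rw [M.2.2]; omega
  right_inv T := by
    obtain ⟨⟨⟨j, q⟩, hjq⟩, ⟨A, hA, hAk⟩, ⟨B, hB⟩⟩ := T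
    have hp : j + q = p := by simpa using hjq
    dsimp only at *
    subst hp
    have e2 := (glue_top (q := q) (B := B) hA hAk).2
    have key : ∀ (j' : ℕ) (q' : ℕ) (hj : j = j') (hq : q = q') (A' B' : ℕ → ℕ → ℕ) (h1 h2 h3), A' = A → B' = B →
      (⟨⟨(j', q'), h1⟩, ⟨A', h2⟩, ⟨B', h3⟩⟩ : Σ ij : antidiagonal (j + q), BT s k ij.1.1 × ZT s ij.1.2) =
      ⟨⟨(j, q), hjq⟩, ⟨A, hA, hAk⟩, ⟨B, hB⟩⟩ := by
      rintro j' q' rfl rfl A' B' h1 h2 h3 rfl rfl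
      rfl
    apply key
    · exact e2.symm
    · show q = j + q - glue k j q A B k 0
      have e3 : glue k j q A B k 0 = j := e2
      rw [e3]; omega
    · rw [e2]; exact spL_glue hA
    · rw [e2]; exact spR_glue

instance ZT_finite (s n : ℕ) : Finite (ZT s n) := by
  let F : ZT s n → (Fin (s + 1) → Fin n → Fin n) := fun M i x => ⟨M.1 i x, M.2.hlt _ _ x.2⟩
  apply Finite.of_injective F
  intro M N h
  apply Subtype.ext
  funext i x
  by_cases hx : x < n
  · by_cases hi : i < s + 1
    · have := congrFun (congrFun h ⟨i, hi⟩) ⟨x, hx⟩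
      simpa [F] using this
    · have := M.2.htop i x (by omega) hx
      have := N.2.htop i x (by omega) hx
      omega
  · rw [M.2.hout _ _ (by omega), N.2.hout _ _ (by omega)]

instance BT_finite (s k n : ℕ) : Finite (BT s k n) :=
  Finite.of_injective (fun M : BT s k n => (⟨M.1, M.2.1⟩ : ZT s (n + 1))) (by
    intro M N h; apply Subtype.ext; simpa using h)

lemma card_BT_succ (s k p : ℕ) (hk : k ≤ s) : Nat.card (BT s (k + 1) p) =
    ∑ ij ∈ antidiagonal p, Nat.card (BT s k ij.1) * Nat.card (ZT s ij.2) := by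
  rw [Nat.card_congr (splitEquiv s k p hk), Nat.card_sigma]
  simp only [Nat.card_prod]
  exact Finset.sum_coe_sort (antidiagonal p) (fun ij => Nat.card (BT s k ij.1) * Nat.card (ZT s ij.2))

lemma triv_ch (s n : ℕ) (hn : n ≤ 1) : IsCh s n (fun _ x => x) := by
  constructor <;> intros <;> omega

lemma card_BT_zero (s p : ℕ) : Nat.card (BT s 0 p) = if p = 0 then 1 else 0 := by
  split_ifs with h
  · subst h
    rw [Nat.card_eq_one_iff_unique]
    refine ⟨⟨?_⟩, ⟨⟨_, triv_ch s 1 le_rfl, rfl⟩⟩⟩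
    intro M N
    apply Subtype.ext
    funext i x
    by_cases hx : x < 1
    · have := M.2.1.hlt i x hx
      have := N.2.1.hlt i x hx
      omega
    · rw [M.2.1.hout _ _ (by omega), N.2.1.hout _ _ (by omega)]
  · have : IsEmpty (BT s 0 p) := ⟨fun M => h (by have := M.2.1.h0 0; have := M.2.2; omega)⟩
    simp

lemma card_ZT_zero (s : ℕ) : Nat.card (ZT s 0) = 1 := by
  rw [Nat.card_eq_one_iff_unique]
  refine ⟨⟨?_⟩, ⟨⟨_, triv_ch s 0 (by omega)⟩⟩⟩
  intro M N
  apply Subtype.ext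
  funext i x
  rw [M.2.hout _ _ (by omega), N.2.hout _ _ (by omega)]

lemma card_ZT_succ (s p : ℕ) : Nat.card (ZT s (p + 1)) = Nat.card (BT s (s + 1) p) := by
  apply Nat.card_congr
  refine Equiv.subtypeEquivRight fun M => ⟨fun h => ⟨h, ?_⟩, fun h => h.1⟩
  have := h.htop (s + 1) 0 (by omega) (by omega)
  omega

open PowerSeries in
noncomputable def GZ (s : ℕ) : PowerSeries ℕ := PowerSeries.mk fun n => Nat.card (ZT s n)

open PowerSeries in
lemma BT_series (s k : ℕ) (hk : k ≤ s + 1) :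
    (PowerSeries.mk fun n => Nat.card (BT s k n)) = GZ s ^ k := by
  induction k with
  | zero =>
    ext n
    simp [card_BT_zero, PowerSeries.coeff_one]
  | succ k ih =>
    rw [pow_succ, ← ih (by omega)]
    ext n
    simp [PowerSeries.coeff_mul, GZ, card_BT_succ s k n (by omega)]

open PowerSeries in
lemma GZ_eq (s : ℕ) : GZ s = 1 + PowerSeries.X * GZ s ^ (s + 1) := by
  rw [← BT_series s (s + 1) le_rfl]
  ext n
  cases n with
  | zero => simp [GZ, card_ZT_zero]
  | succ n => simp [GZ, PowerSeries.coeff_succ_X_mul, PowerSeries.coeff_one, card_ZT_succ]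

open PowerSeries in
lemma GZ_coeff_rec (s r n : ℕ) : coeff (n + 1) (GZ s ^ (r + 1)) =
    coeff (n + 1) (GZ s ^ r) + coeff n (GZ s ^ (r + (s + 1))) := by
  have : GZ s ^ (r + 1) = GZ s ^ r + X * GZ s ^ (r + (s + 1)) := by
    rw [pow_succ]
    nth_rewrite 2 [GZ_eq s]
    ring
  rw [this, map_add, PowerSeries.coeff_succ_X_mul]

open PowerSeries in
lemma GZ_coeff_zero (s r : ℕ) : coeff 0 (GZ s ^ r) = 1 := by
  simp [GZ, card_ZT_zero]

open PowerSeries in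
lemma GZ_coeff (s n r : ℕ) : (n * (s + 1) + r) * coeff n (GZ s ^ r) =
    r * Nat.choose (n * (s + 1) + r) n := by
  induction n generalizing r with
  | zero => rw [GZ_coeff_zero]; simp
  | succ n ih =>
    induction r with
    | zero => simp [PowerSeries.coeff_one]
    | succ r ihr =>
      rw [GZ_coeff_rec]
      have h1 := ih (r + (s + 1))
      generalize coeff (n + 1) (GZ s ^ r) = a at *
      generalize coeff n (GZ s ^ (r + (s + 1))) = b at *
      clear ih
      rw [show n * (s + 1) + (r + (s + 1)) = (n + 1) * (s + 1) + r by ring] at h1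
      rw [← add_assoc]
      obtain ⟨Q, hQ⟩ : ∃ Q, Q = (n + 1) * (s + 1) + r := ⟨_, rfl⟩
      rw [← hQ] at ihr h1 ⊢
      have hQn : n + 1 ≤ Q := by nlinarith
      have hc := Nat.choose_succ_right_eq Q n
      rw [Nat.choose_succ_succ]
      generalize Nat.choose Q (n + 1) = v at *
      generalize Nat.choose Q n = u at *
      zify [show n ≤ Q by omega] at *
      have hQ0 : (Q : ℤ) ≠ 0 := by omega
      apply mul_left_cancel₀ hQ0
      linear_combination ((Q : ℤ) + 1) * (ihr + h1) - (s + 1) * hc + (-u - v) * hQ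

lemma card_ZT (s p : ℕ) : (s * p + 1) * Nat.card (ZT s p) = Nat.choose (s * p + p) p := by
  have h := GZ_coeff s p 1
  rw [pow_one, one_mul] at h
  have e : PowerSeries.coeff p (GZ s) = Nat.card (ZT s p) := by simp [GZ]
  rw [e] at h
  have h2 := Nat.choose_mul_succ_eq (s * p + p) p
  rw [show p * (s + 1) + 1 = s * p + p + 1 by ring] at h
  rw [← h, show s * p + p + 1 - p = s * p + 1 by omega] at h2
  have : 0 < s * p + p + 1 := by omega
  apply Nat.eq_of_mul_eq_mul_left this
  linarith

/-- max of the block -/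
def mx {p : ℕ} (P : Finpartition (Finset.univ : Finset (Fin p))) (x : Fin p) : Fin p :=
  (P.part x).max' (by simp)

section
variable {p : ℕ} (P Q : Finpartition (Finset.univ : Finset (Fin p)))

lemma mx_mem (x : Fin p) : mx P x ∈ P.part x := Finset.max'_mem _ _

lemma part_eq_of {x y : Fin p} (h : y ∈ P.part x) : P.part y = P.part x :=
  P.part_eq_of_mem (by simp) h

lemma mx_eq_iff (x y : Fin p) : mx P x = mx P y ↔ P.part x = P.part y := by
  constructor
  · intro h
    rw [← part_eq_of P (mx_mem P x), ← part_eq_of P (mx_mem P y), h]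
  · intro h
    simp only [mx, h]

lemma le_mx (x : Fin p) : x ≤ mx P x := Finset.le_max' _ _ (by simp)

lemma mx_mx (x : Fin p) : mx P (mx P x) = mx P x := (mx_eq_iff P _ _).2 (part_eq_of P (mx_mem P x))

lemma le_iff_mx : P ≤ Q ↔ ∀ x, mx Q (mx P x) = mx Q x := by
  constructor
  · intro h x
    obtain ⟨c, hc, hle⟩ := h (P.part_mem.2 (Finset.mem_univ x))
    rw [mx_eq_iff, Q.part_eq_of_mem hc (hle (mx_mem P x)),
      Q.part_eq_of_mem hc (hle (P.mem_part_self.2 (Finset.mem_univ x)))]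
  · intro h b hb
    obtain ⟨x, hx⟩ := P.nonempty_of_mem_parts hb
    refine ⟨Q.part x, by simp, fun y hy => ?_⟩
    have e1 : mx P x = mx P y := by
      rw [mx_eq_iff, P.part_eq_of_mem hb hx, P.part_eq_of_mem hb hy]
    have e2 : mx Q x = mx Q y := by rw [← h x, ← h y, e1]
    rw [(mx_eq_iff Q x y).1 e2]; simp

lemma mx_inj (h : ∀ x, mx P x = mx Q x) : P = Q := by
  apply le_antisymm
  · rw [le_iff_mx]; intro x; rw [h, mx_mx]
  · rw [le_iff_mx]; intro x; rw [← h, mx_mx]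

lemma mx_nest (hP : IsNonCrossing P) (x y : Fin p) (h1 : x ≤ y) (h2 : y ≤ mx P x) :
    mx P y ≤ mx P x := by
  by_contra hlt
  push Not at hlt
  have hne : P.part x ≠ P.part y := fun h => hlt.ne ((mx_eq_iff P x y).2 h)
  refine hP ⟨x, y, mx P x, mx P y, P.part x, P.part y, by simp, by simp, hne,
    lt_of_le_of_ne h1 (fun h => hne (by rw [h])), lt_of_le_of_ne h2 (fun h => hne ?_), hlt, by simp,
    mx_mem P x, by simp, mx_mem P y⟩
  rw [h, part_eq_of P (mx_mem P x)]

lemma exists_mx (m : Fin p → Fin p) (hle : ∀ x, x ≤ m x)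
    (hn : ∀ x y, x ≤ y → y ≤ m x → m y ≤ m x) :
    ∃ P : Finpartition (Finset.univ : Finset (Fin p)), IsNonCrossing P ∧ ∀ x, mx P x = m x := by
  classical
  have hmm : ∀ x, m (m x) = m x := fun x => le_antisymm (hn _ _ (hle x) le_rfl) (hle _)
  let P := Finpartition.ofSetoid (Setoid.ker m)
  have hP : ∀ x y, y ∈ P.part x ↔ m x = m y := fun x y => Finpartition.mem_part_ofSetoid_iff_rel
  refine ⟨P, ?_, ?_⟩
  · rintro ⟨a, b, c, d, X, Y, hX, hY, hXY, hab, hbc, hcd, ha, hc, hb, hd⟩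
    have e1 : m a = m c := by rw [← hP, P.part_eq_of_mem hX ha]; exact hc
    have e2 : m b = m d := by rw [← hP, P.part_eq_of_mem hY hb]; exact hd
    have c1 := hle c
    have d1 := hle d
    have i1 : m b ≤ m a := hn a b hab.le (by rw [e1]; exact hbc.le.trans c1)
    have i2 : m c ≤ m b := hn b c hbc.le (by rw [e2]; exact hcd.le.trans d1)
    have e3 : m a = m b := le_antisymm (e1 ▸ i2) i1
    apply hXY
    rw [← P.part_eq_of_mem hX ha, ← P.part_eq_of_mem hY hb]
    exact (part_eq_of P ((hP a b).2 e3)).symm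
  · intro x
    apply le_antisymm
    · have := (hP _ _).1 (mx_mem P x)
      rw [this]; exact hle _
    · exact Finset.le_max' _ _ ((hP _ _).2 (hmm x).symm)

end

/-- extension of a chain of NC partitions -/
def extCh {s p : ℕ} (f : Fin s → NCP p) : ℕ → ℕ → ℕ := fun i x =>
  if hx : x < p then
    if hi : i - 1 < s then if i = 0 then x else (mx (f ⟨i - 1, hi⟩).1 ⟨x, hx⟩ : ℕ)
    else p - 1
  else x

section
variable {s p : ℕ} (f : Fin s → NCP p)
lemma ext_out (i x : ℕ) (h : p ≤ x) : extCh f i x = x := by simp [extCh, h]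
lemma ext_zero (hs : 0 < s) (x : ℕ) : extCh f 0 x = x := by simp [extCh, hs]
lemma ext_mid (i : Fin s) (x : Fin p) : extCh f (i + 1) x = mx (f i).1 x := by simp [extCh]
lemma ext_top (i x : ℕ) (h : s < i) (hx : x < p) : extCh f i x = p - 1 := by
  unfold extCh; rw [dif_pos hx, dif_neg (by omega)]

lemma ext_ch (hs : 0 < s) (hf : Monotone f) : IsCh s p (extCh f) := by
  have cases3 : ∀ i : ℕ, i = 0 ∨ (∃ j : Fin s, i = j + 1) ∨ s < i := by
    intro i
    rcases Nat.eq_zero_or_pos i with h | h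
    · exact Or.inl h
    · by_cases h2 : s < i
      · exact Or.inr (Or.inr h2)
      · exact Or.inr (Or.inl ⟨⟨i - 1, by omega⟩, by simp; omega⟩)
  have hle : ∀ i x, x ≤ extCh f i x := by
    intro i x
    by_cases hx : x < p
    · rcases cases3 i with rfl | ⟨j, rfl⟩ | h
      · rw [ext_zero f hs]
      · rw [ext_mid f j ⟨x, hx⟩]; exact le_mx (f j).1 ⟨x, hx⟩
      · rw [ext_top f i x h hx]; omega
    · rw [ext_out f i x (by omega)]
  have hlt : ∀ i x, x < p → extCh f i x < p := by
    intro i x hx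
    rcases cases3 i with rfl | ⟨j, rfl⟩ | h
    · rwa [ext_zero f hs]
    · rw [ext_mid f j ⟨x, hx⟩]; exact Fin.is_lt _
    · rw [ext_top f i x h hx]; omega
  refine ⟨ext_zero f hs, ext_out f, hle, hlt, ?_, ?_, ?_⟩
  · intro i x y hxy hy
    by_cases hx : x < p
    · have hyp : y < p := hy.trans_lt (hlt i x hx)
      rcases cases3 i with rfl | ⟨j, rfl⟩ | h
      · rw [ext_zero f hs y]; exact hy
      · rw [ext_mid f j ⟨x, hx⟩] at *
        rw [ext_mid f j ⟨y, hyp⟩]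
        exact mx_nest _ (f j).2 ⟨x, hx⟩ ⟨y, hyp⟩ hxy hy
      · rw [ext_top f i x h hx, ext_top f i y h hyp]
    · rw [ext_out f i x (by omega)] at *
      rw [ext_out f i y (by omega)]; exact hy
  · intro i i' x hi
    by_cases hx : x < p
    · rcases cases3 i with rfl | ⟨j, rfl⟩ | h
      · rw [ext_zero f hs]
      · rcases cases3 i' with rfl | ⟨j', rfl⟩ | h'
        · omega
        · rw [ext_mid f j ⟨x, hx⟩, ext_mid, ext_mid f j' ⟨x, hx⟩]
          have := (le_iff_mx (f j).1 (f j').1).1 (hf (Fin.le_def.2 (by omega))) ⟨x, hx⟩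
          rw [this]
        · rw [ext_top f i' x h' hx, ext_top f i' _ h' (hlt _ _ hx)]
      · rw [ext_top f i' x (by omega) hx, ext_top f i' _ (by omega) (hlt _ _ hx)]
    · rw [ext_out f i x (by omega)]
  · intro i x h hx
    rw [ext_top f i x h hx]; omega
end

lemma card_chain (s p : ℕ) (hs : 0 < s) :
    Nat.card {f : Fin s → NCP p // Monotone f} = Nat.card (ZT s p) := by
  apply Nat.card_congr
  refine Equiv.ofBijective (fun f => ⟨extCh f.1, ext_ch f.1 hs f.2⟩) ⟨?_, ?_⟩
  · intro f g h
    have h' : extCh f.1 = extCh g.1 := congrArg Subtype.val h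
    apply Subtype.ext
    funext i
    apply Subtype.ext
    apply mx_inj
    intro x
    apply Fin.ext
    rw [← ext_mid, ← ext_mid, h']
  · rintro ⟨M, hM⟩
    have : ∀ i : Fin s, ∃ P : NCP p, ∀ x : Fin p, (mx P.1 x : ℕ) = M (i + 1) x := by
      intro i
      obtain ⟨P, h1, h2⟩ := exists_mx (p := p) (fun x => ⟨M (i + 1) x, hM.hlt _ _ x.2⟩)
        (fun x => hM.hle _ _) (fun x y hxy hy => hM.hnest _ _ _ hxy hy)
      exact ⟨⟨P, h1⟩, fun x => by rw [h2]⟩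
    choose f hf using this
    have hmono : Monotone f := by
      intro i j hij
      show (f i).1 ≤ (f j).1
      rw [le_iff_mx]
      intro x
      apply Fin.ext
      rw [hf, hf, hf, hM.hcomp]
      have := Fin.le_def.1 hij
      omega
    refine ⟨⟨f, hmono⟩, Subtype.ext ?_⟩
    funext i x
    show extCh f i x = M i x
    by_cases hx : x < p
    · rcases Nat.eq_zero_or_pos i with rfl | h
      · rw [ext_zero f hs, hM.h0]
      · by_cases h2 : s < i
        · have := hM.htop i x h2 hx
          rw [ext_top f i x h2 hx]; omega
        · have := ext_mid f ⟨i - 1, by omega⟩ ⟨x, hx⟩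
          rw [hf] at this
          simpa [show i - 1 + 1 = i by omega] using this
    · rw [ext_out f i x (by omega), hM.hout i x (by omega)]

/-- **Fuss–Catalan numbers count chains in `NC(p)`.** For positive `p` and `s`, the number of
weakly increasing `s`-tuples of non-crossing partitions of `[p]` is
`FC⁽ˢ⁾_p = (1/(sp+1)) * choose (sp+p) p`. -/
theorem fussCatalan_counts_chains (p s : ℕ) (hp : 0 < p) (hs : 0 < s) :
    (s * p + 1) * Nat.card {f : Fin s → NCP p // Monotone f} = Nat.choose (s * p + p) p := by
  rw [card_chain s p hs, card_ZT]
end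

section
/- Let γ = (1 2 ... p) be the full cycle in S_p. The set of permutations σ ∈ S_p satisfying |σ| + |σ⁻¹γ| = p − 1 is in bijection with the set NC(p) of non-crossing partitions of {1,...,p}, the bijection sending σ to the partition [σ] given by the orbits of σ. In particular, the number of such permutations equals the Catalan number C_p = (1/(p+1)) * binomial(2p, p). -/
open Equiv Finset MeasureTheory

/-- The setoid on `Fin n` whose classes are the orbits (cycles) of `σ`. -/
def sameCycleSetoid {n : ℕ} (σ : Equiv.Perm (Fin n)) : Setoid (Fin n) :=
  ⟨σ.SameCycle, ⟨Equiv.Perm.SameCycle.refl σ, fun h => h.symm, fun h h' => h.trans h'⟩⟩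

instance {n : ℕ} (σ : Equiv.Perm (Fin n)) : DecidableRel ⇑(sameCycleSetoid σ) :=
  fun a b => (inferInstance : Decidable (σ.SameCycle a b))

/-- The partition of `Fin n` into orbits of `σ`. -/
def orbitPartition {n : ℕ} (σ : Equiv.Perm (Fin n)) :
    Finpartition (Finset.univ : Finset (Fin n)) :=
  Finpartition.ofSetoid (sameCycleSetoid σ)


/-! ### Cycle counting -/

/-- number of orbits -/
noncomputable def cyc {n : ℕ} (σ : Equiv.Perm (Fin n)) : ℕ :=
  Nat.card (Quotient (sameCycleSetoid σ))

lemma card_quot_split {α : Type*} [Finite α] (r r' : Setoid α) (a b : α)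
    (hle : ∀ x y, r' x y → r x y) (hab : r a b) (hab' : ¬ r' a b)
    (hT : ∀ x y, r x y → r' x y ∨ (r' x a ∧ r' y b) ∨ (r' x b ∧ r' y a)) :
    Nat.card (Quotient r') = Nat.card (Quotient r) + 1 := by
  classical
  have : Fintype (Quotient r') := Fintype.ofFinite _
  let f : {q : Quotient r' // q ≠ Quotient.mk r' b} → Quotient r :=
    fun q => Quotient.map' id (fun x y h => hle x y h) q.1
  have hf : Function.Bijective f := by
    constructor
    · rintro ⟨q, hq⟩ ⟨q', hq'⟩ h
      induction q using Quotient.inductionOn with | _ x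
      induction q' using Quotient.inductionOn with | _ y
      have h' : r x y := Quotient.exact h
      apply Subtype.ext
      apply Quotient.sound
      rcases hT x y h' with h1 | h1 | h1
      · exact h1
      · exact absurd (Quotient.sound h1.2) hq'
      · exact absurd (Quotient.sound h1.1) hq
    · intro q
      induction q using Quotient.inductionOn with | _ x
      by_cases hx : r' x b
      · refine ⟨⟨Quotient.mk r' a, fun h => hab' (Quotient.exact h)⟩, ?_⟩
        apply Quotient.sound
        exact r.trans hab (r.symm (hle _ _ hx))
      · exact ⟨⟨Quotient.mk r' x, fun h => hx (Quotient.exact h)⟩, rfl⟩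
  rw [← Nat.card_congr (Equiv.ofBijective f hf), Nat.card_eq_fintype_card,
    Nat.card_eq_fintype_card, Fintype.card_subtype_compl, Fintype.card_subtype_eq]
  have : 0 < Fintype.card (Quotient r') := Fintype.card_pos_iff.2 ⟨Quotient.mk r' b⟩
  omega

/-- orbit induction -/
lemma sameCycle_rel {n : ℕ} (σ : Equiv.Perm (Fin n)) (R : Fin n → Fin n → Prop)
    (hr : ∀ x, R x x) (ht : ∀ x y z, R x y → R y z → R x z) (h : ∀ x, R x (σ x)) {x y : Fin n}
    (hxy : σ.SameCycle x y) : R x y := by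
  obtain ⟨i, rfl⟩ := hxy.exists_nat_pow_eq
  induction i with
  | zero => simpa using hr x
  | succ k ih =>
    rw [pow_succ', Equiv.Perm.mul_apply]
    exact ht _ _ _ (ih ⟨k, by simp⟩) (h _)

lemma sc_apply {n : ℕ} (σ : Equiv.Perm (Fin n)) (x : Fin n) : σ.SameCycle x (σ x) :=
  ⟨1, by simp⟩

lemma swap_step {n : ℕ} (σ : Equiv.Perm (Fin n)) (a b x : Fin n) :
    (x = a ∧ (σ * swap a b) x = σ b) ∨ (x = b ∧ (σ * swap a b) x = σ a) ∨
      (x ≠ a ∧ x ≠ b ∧ (σ * swap a b) x = σ x) := by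
  by_cases h1 : x = a
  · left; simp [h1]
  by_cases h2 : x = b
  · right; left; simp [h2]
  · right; right; simp [h1, h2, swap_apply_of_ne_of_ne]

lemma split_le {n : ℕ} (σ : Equiv.Perm (Fin n)) {a b : Fin n} (hab : σ.SameCycle a b)
    {x y : Fin n} (h : (σ * swap a b).SameCycle x y) : σ.SameCycle x y := by
  refine sameCycle_rel _ σ.SameCycle (fun _ => .refl _ _) (fun _ _ _ h h' => h.trans h') ?_ h
  intro x
  rcases swap_step σ a b x with ⟨rfl, h⟩ | ⟨rfl, h⟩ | ⟨_, _, h⟩ <;> rw [h]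
  · exact hab.trans (sc_apply _ _)
  · exact hab.symm.trans (sc_apply _ _)
  · exact sc_apply _ _

lemma split_cover {n : ℕ} (σ : Equiv.Perm (Fin n)) (a b : Fin n)
    {x y : Fin n} (h : σ.SameCycle x y) : (σ * swap a b).SameCycle x y ∨
      ((σ * swap a b).SameCycle x a ∧ (σ * swap a b).SameCycle y b) ∨
      ((σ * swap a b).SameCycle x b ∧ (σ * swap a b).SameCycle y a) := by
  refine sameCycle_rel σ (fun x y => (σ * swap a b).SameCycle x y ∨
      ((σ * swap a b).SameCycle x a ∧ (σ * swap a b).SameCycle y b) ∨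
      ((σ * swap a b).SameCycle x b ∧ (σ * swap a b).SameCycle y a)) ?_ ?_ ?_ h
  · intro x; exact Or.inl (.refl _ _)
  · intro x y z h1 h2
    rcases h1 with h1 | ⟨h1, h1'⟩ | ⟨h1, h1'⟩ <;> rcases h2 with h2 | ⟨h2, h2'⟩ | ⟨h2, h2'⟩
    · exact Or.inl (h1.trans h2)
    · exact Or.inr (Or.inl ⟨h1.trans h2, h2'⟩)
    · exact Or.inr (Or.inr ⟨h1.trans h2, h2'⟩)
    · exact Or.inr (Or.inl ⟨h1, h2.symm.trans h1'⟩)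
    · exact Or.inl (h1.trans (h2.symm.trans (h1'.trans h2'.symm)))
    · exact Or.inl (h1.trans h2'.symm)
    · exact Or.inr (Or.inr ⟨h1, h2.symm.trans h1'⟩)
    · exact Or.inl (h1.trans h2'.symm)
    · exact Or.inl (h1.trans (h2.symm.trans (h1'.trans h2'.symm)))
  · intro x
    by_cases h1 : x = a
    · subst h1
      right; left
      refine ⟨.refl _ _, ?_⟩
      have := sc_apply (σ * swap x b) b
      simp only [Perm.mul_apply, swap_apply_right] at this
      exact this.symm
    by_cases h2 : x = b
    · subst h2
      right; right
      refine ⟨.refl _ _, ?_⟩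
      have := sc_apply (σ * swap a x) a
      simp only [Perm.mul_apply, swap_apply_left] at this
      exact this.symm
    · left
      have := sc_apply (σ * swap a b) x
      simpa only [Perm.mul_apply, swap_apply_of_ne_of_ne h1 h2] using this

lemma merge_sc {n : ℕ} (σ : Equiv.Perm (Fin n)) {a b : Fin n} (hab : ¬ σ.SameCycle a b) :
    (σ * swap a b).SameCycle a b := by
  by_contra hn
  have key : ∀ j : ℕ, (σ * swap a b).SameCycle a ((σ ^ (j+1)) b) := by
    intro j
    induction j with
    | zero =>
      have := sc_apply (σ * swap a b) a
      simpa only [Perm.mul_apply, swap_apply_left, zero_add, pow_one] using this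
    | succ j ih =>
      rw [pow_succ', Perm.mul_apply]
      set x := (σ ^ (j+1)) b with hx
      have h2 : x ≠ b := by intro h; rw [h] at ih; exact hn ih
      have h1 : x ≠ a := by
        intro h; apply hab; exact (show σ.SameCycle b a from ⟨(j+1 : ℕ), by
          rw [zpow_natCast, ← hx, h]⟩).symm
      have := sc_apply (σ * swap a b) x
      simp only [Perm.mul_apply, swap_apply_of_ne_of_ne h1 h2] at this
      exact ih.trans this
  have := key (orderOf σ - 1)
  rw [Nat.sub_add_cancel (orderOf_pos σ), pow_orderOf_eq_one] at this
  exact hn this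

lemma split_not_sc {n : ℕ} (σ : Equiv.Perm (Fin n)) {a b : Fin n} (hne : a ≠ b)
    (hab : σ.SameCycle a b) : ¬ (σ * swap a b).SameCycle a b := by
  classical
  have hex : ∃ k : ℕ, 0 < k ∧ (σ ^ k) b = a := by
    obtain ⟨i, hi, _, h⟩ := hab.symm.exists_pow_eq''
    exact ⟨i, hi, h⟩
  let k := Nat.find hex
  obtain ⟨hk, hka⟩ : 0 < k ∧ (σ ^ k) b = a := Nat.find_spec hex
  have hmin : ∀ m, 0 < m → (σ ^ m) b = a → k ≤ m := fun m h1 h2 => Nat.find_min' hex ⟨h1, h2⟩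
  have hb : ∀ i, 0 < i → i ≤ k → (σ ^ i) b ≠ b := by
    intro i hi hik h
    have hik' : i < k := by
      rcases hik.lt_or_eq with h' | h'
      · exact h'
      · rw [h', hka] at h; exact absurd h hne
    have : (σ ^ (k - i)) b = a := by
      rw [← hka]
      conv_rhs => rw [show k = (k - i) + i by omega, pow_add, Perm.mul_apply, h]
    have := hmin (k - i) (by omega) this
    omega
  intro hn
  have := sameCycle_rel _ (fun x y => (∃ i, 0 < i ∧ i ≤ k ∧ (σ ^ i) b = x) →
    (∃ i, 0 < i ∧ i ≤ k ∧ (σ ^ i) b = y)) (fun x h => h) (fun x y z h h' h'' => h' (h h'')) ?_ hn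
  · obtain ⟨i, h1, h2, h3⟩ := this ⟨k, hk, le_rfl, hka⟩
    exact hb i h1 h2 h3
  · rintro x ⟨i, hi, hik, rfl⟩
    rcases hik.lt_or_eq with h' | h'
    · refine ⟨i + 1, by omega, by omega, ?_⟩
      rw [pow_succ', Perm.mul_apply, Perm.mul_apply, swap_apply_of_ne_of_ne]
      · intro h
        have := hmin i hi h
        omega
      · exact hb i hi hik
    · refine ⟨1, by omega, by omega, ?_⟩
      rw [h', hka]; simp

lemma cyc_split {n : ℕ} (σ : Equiv.Perm (Fin n)) {a b : Fin n} (hne : a ≠ b)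
    (hab : σ.SameCycle a b) : cyc (σ * swap a b) = cyc σ + 1 :=
  card_quot_split (sameCycleSetoid σ) (sameCycleSetoid (σ * swap a b)) a b
    (fun _ _ h => split_le σ hab h) hab (split_not_sc σ hne hab) (fun _ _ h => split_cover σ a b h)

lemma cyc_merge {n : ℕ} (σ : Equiv.Perm (Fin n)) {a b : Fin n}
    (hab : ¬ σ.SameCycle a b) : cyc σ = cyc (σ * swap a b) + 1 := by
  have hne : a ≠ b := by rintro rfl; exact hab (.refl _ _)
  have := cyc_split (σ * swap a b) hne (merge_sc σ hab)
  rwa [mul_assoc, swap_mul_self, mul_one] at this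

lemma cyc_one {n : ℕ} : cyc (1 : Equiv.Perm (Fin n)) = n := by
  have : Function.Bijective (Quotient.mk (sameCycleSetoid (1 : Equiv.Perm (Fin n)))) := by
    constructor
    · intro x y h
      have : (1 : Equiv.Perm (Fin n)).SameCycle x y := Quotient.exact h
      simpa using this
    · exact Quotient.mk_surjective
  rw [cyc, ← Nat.card_congr (Equiv.ofBijective _ this)]
  simp

lemma cyc_le {n : ℕ} (σ : Equiv.Perm (Fin n)) : cyc σ ≤ n := by
  have := Nat.card_le_card_of_surjective _ (Quotient.mk_surjective (s := sameCycleSetoid σ))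
  simpa [cyc] using this

/-- multiplying by a list of swaps -/
lemma cyc_mul_list {n : ℕ} (l : List (Equiv.Perm (Fin n))) (hl : ∀ τ ∈ l, τ.IsSwap)
    (σ : Equiv.Perm (Fin n)) :
    cyc (σ * l.prod) ≤ cyc σ + l.length ∧ cyc σ ≤ cyc (σ * l.prod) + l.length := by
  induction l generalizing σ with
  | nil => simp
  | cons t l ih =>
    obtain ⟨a, b, hne, rfl⟩ := hl t (by simp)
    have := ih (fun τ h => hl τ (by simp [h])) (σ * swap a b)
    rw [List.prod_cons, ← mul_assoc, List.length_cons]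
    by_cases hab : σ.SameCycle a b
    · have := cyc_split σ hne hab
      omega
    · have := cyc_merge σ hab
      omega

lemma exists_list {n : ℕ} (k : ℕ) (σ : Equiv.Perm (Fin n)) (hk : n - cyc σ = k) :
    ∃ l : List (Equiv.Perm (Fin n)), (∀ τ ∈ l, τ.IsSwap) ∧ l.prod = σ ∧ l.length = k := by
  induction k generalizing σ with
  | zero =>
    refine ⟨[], by simp, ?_, rfl⟩
    rw [List.prod_nil]
    by_contra hne
    obtain ⟨x, hx⟩ : ∃ x, σ x ≠ x := by
      by_contra! h; exact hne (Equiv.ext fun x => (h x).symm)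
    have := cyc_split σ hx.symm (sc_apply σ x)
    have := cyc_le (σ * swap x (σ x))
    omega
  | succ k ih =>
    obtain ⟨x, hx⟩ : ∃ x, σ x ≠ x := by
      by_contra! h
      have : σ = 1 := Equiv.ext fun x => h x
      rw [this, cyc_one] at hk
      omega
    have := cyc_split σ hx.symm (sc_apply σ x)
    obtain ⟨l, h1, h2, h3⟩ := ih (σ * swap x (σ x)) (by omega)
    refine ⟨l ++ [swap x (σ x)], ?_, ?_, ?_⟩
    · intro τ hτ
      rw [List.mem_append, List.mem_singleton] at hτ
      rcases hτ with h | rfl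
      · exact h1 τ h
      · exact ⟨x, σ x, hx.symm, rfl⟩
    · rw [List.prod_append, h2]; simp
    · simp [h3]

lemma permLength_spec {n : ℕ} (σ : Equiv.Perm (Fin n)) :
    ∃ l : List (Equiv.Perm (Fin n)), (∀ τ ∈ l, τ.IsSwap) ∧ l.prod = σ ∧
      l.length = permLength σ := by
  have := Nat.sInf_mem (s := {k | ∃ l : List (Equiv.Perm (Fin n)),
    (∀ τ ∈ l, τ.IsSwap) ∧ l.prod = σ ∧ l.length = k}) ⟨_, exists_list _ σ rfl⟩
  exact this

lemma permLength_le {n : ℕ} (l : List (Equiv.Perm (Fin n))) (hl : ∀ τ ∈ l, τ.IsSwap) :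
    permLength l.prod ≤ l.length := Nat.sInf_le ⟨l, hl, rfl, rfl⟩

lemma permLength_eq {n : ℕ} (σ : Equiv.Perm (Fin n)) : permLength σ + cyc σ = n := by
  have h1 : permLength σ ≤ n - cyc σ := Nat.sInf_le (exists_list _ σ rfl)
  obtain ⟨l, hl, h2, h3⟩ := permLength_spec σ
  have := cyc_mul_list l hl 1
  rw [one_mul, h2, cyc_one] at this
  have := cyc_le σ
  omega

/-! ### Geodesics as iterated splittings -/

/-- `y` lies strictly between `x` and `z` in the cyclic order -/
def CBtw (x y z : ℕ) : Prop := (x < z ∧ x < y ∧ y < z) ∨ (z ≤ x ∧ (y < z ∨ x < y))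

/-- non-crossing relation -/
def NCR {n : ℕ} (r : Fin n → Fin n → Prop) : Prop :=
  ∀ a b c d : Fin n, a.1 < b.1 → b.1 < c.1 → c.1 < d.1 → r a c → r b d → r a b

/-- cycles are increasing and non-crossing -/
def Adm {n : ℕ} (σ : Equiv.Perm (Fin n)) : Prop :=
  (∀ x z, σ.SameCycle x z → ¬ CBtw x.1 z.1 (σ x).1) ∧ NCR σ.SameCycle

/-- iterated splittings of the long cycle -/
inductive Gd {n : ℕ} : Equiv.Perm (Fin n) → Prop
  | base : Gd (finRotate n)
  | step (σ : Equiv.Perm (Fin n)) (a b : Fin n) (hab : a.1 < b.1) (h : σ.SameCycle a b)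
      (hσ : Gd σ) : Gd (σ * swap a b)

lemma val_rotate {n : ℕ} (x : Fin n) :
    (x.1 + 1 < n ∧ (finRotate n x).1 = x.1 + 1) ∨ (x.1 + 1 = n ∧ (finRotate n x).1 = 0) := by
  obtain _ | n := n
  · exact x.elim0
  · have := x.2
    rw [coe_finRotate]
    by_cases h : x = Fin.last n
    · right; simp [h]
    · left
      have : x.1 ≠ n := fun h' => h (Fin.ext h')
      simp only [h, if_false, and_true]; omega

lemma rotate_sc {n : ℕ} (x y : Fin n) : (finRotate n).SameCycle x y := by
  have h0 : ∀ k (hk : k < n), (finRotate n).SameCycle ⟨0, by omega⟩ ⟨k, hk⟩ := by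
    intro k
    induction k with
    | zero => intro hk; exact .refl _ _
    | succ k ih =>
      intro hk
      refine (ih (by omega)).trans ?_
      have h1 := sc_apply (finRotate n) ⟨k, by omega⟩
      have h2 : finRotate n ⟨k, by omega⟩ = ⟨k+1, hk⟩ := by
        apply Fin.ext
        rcases val_rotate (⟨k, by omega⟩ : Fin n) with h | h <;> simp only at h ⊢ <;> omega
      rwa [h2] at h1
  exact (h0 x.1 x.2).symm.trans (h0 y.1 y.2)

lemma cyc_rotate {n : ℕ} (hn : 0 < n) : cyc (finRotate n) = 1 := by
  rw [cyc, Nat.card_eq_one_iff_unique]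
  refine ⟨⟨fun x y => ?_⟩, ⟨Quotient.mk _ ⟨0, hn⟩⟩⟩
  induction x using Quotient.inductionOn with | _ x
  induction y using Quotient.inductionOn with | _ y
  exact Quotient.sound (rotate_sc x y)

lemma adm_rotate {n : ℕ} : Adm (finRotate n) := by
  refine ⟨fun x z _ => ?_, fun a b _ _ _ _ _ _ _ => rotate_sc a b⟩
  have := z.2
  rcases val_rotate x with h | h <;> unfold CBtw <;> omega

lemma adm_split_fwd {n : ℕ} {σ : Equiv.Perm (Fin n)} (hσ : Adm σ) {a b : Fin n} (hab : a.1 < b.1)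
    (h : σ.SameCycle a b) {x y : Fin n} (hxy : (σ * swap a b).SameCycle x y)
    (hx : σ.SameCycle x a) : (a.1 < x.1 ∧ x.1 ≤ b.1 ↔ a.1 < y.1 ∧ y.1 ≤ b.1) := by
  refine (sameCycle_rel (σ * swap a b) (fun x y => σ.SameCycle x y ∧ (σ.SameCycle x a →
    (a.1 < x.1 ∧ x.1 ≤ b.1 ↔ a.1 < y.1 ∧ y.1 ≤ b.1))) ?_ ?_ ?_ hxy).2 hx
  · intro x; exact ⟨.refl _ _, fun _ => Iff.rfl⟩
  · intro x y z h1 h2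
    exact ⟨h1.1.trans h2.1, fun h3 => (h1.2 h3).trans (h2.2 (h1.1.symm.trans h3))⟩
  · intro x
    refine ⟨split_le σ h (sc_apply _ _), fun hxa => ?_⟩
    have ha := hσ.1 x a hxa
    have hb := hσ.1 x b (hxa.trans h)
    have hab' := hσ.1 a b h
    have hba' := hσ.1 b a h.symm
    unfold CBtw at *
    rcases swap_step σ a b x with ⟨rfl, h'⟩ | ⟨rfl, h'⟩ | ⟨h1, h2, h'⟩ <;> rw [h']
    · omega
    · omega
    · have h1' : x.1 ≠ a.1 := fun h => h1 (Fin.ext h)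
      have h2' : x.1 ≠ b.1 := fun h => h2 (Fin.ext h)
      omega

lemma adm_split_iff {n : ℕ} {σ : Equiv.Perm (Fin n)} (hσ : Adm σ) {a b : Fin n} (hab : a.1 < b.1)
    (h : σ.SameCycle a b) {x y : Fin n} : (σ * swap a b).SameCycle x y ↔
      σ.SameCycle x y ∧ (σ.SameCycle x a →
        (a.1 < x.1 ∧ x.1 ≤ b.1 ↔ a.1 < y.1 ∧ y.1 ≤ b.1)) := by
  constructor
  · intro hxy
    exact ⟨split_le σ h hxy, adm_split_fwd hσ hab h hxy⟩
  · rintro ⟨h1, h2⟩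
    rcases split_cover σ a b h1 with h3 | ⟨h3, h4⟩ | ⟨h3, h4⟩
    · exact h3
    · have e3 := split_le σ h h3
      have e4 := split_le σ h h4
      have := h2 e3
      have := adm_split_fwd hσ hab h h3 e3
      have := adm_split_fwd hσ hab h h4 (e4.trans h.symm)
      omega
    · have e3 := split_le σ h h3
      have e4 := split_le σ h h4
      have := h2 (e3.trans h.symm)
      have := adm_split_fwd hσ hab h h3 (e3.trans h.symm)
      have := adm_split_fwd hσ hab h h4 e4
      omega

lemma adm_step {n : ℕ} {σ : Equiv.Perm (Fin n)} (hσ : Adm σ) {a b : Fin n} (hab : a.1 < b.1)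
    (h : σ.SameCycle a b) : Adm (σ * swap a b) := by
  constructor
  · intro x z hxz
    obtain ⟨h1, h2⟩ := (adm_split_iff hσ hab h).1 hxz
    rcases swap_step σ a b x with ⟨rfl, h'⟩ | ⟨rfl, h'⟩ | ⟨_, _, h'⟩ <;> rw [h']
    · have := h2 (.refl _ _)
      have hab' := hσ.1 x b h
      have hba' := hσ.1 b x h.symm
      have := hσ.1 b z (h.symm.trans h1)
      unfold CBtw at *
      omega
    · have := h2 h.symm
      have hab' := hσ.1 a x h
      have hba' := hσ.1 x a h.symm
      have := hσ.1 a z (h.trans h1)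
      unfold CBtw at *
      omega
    · exact hσ.1 x z h1
  · intro x y z w hxy hyz hzw h1 h2
    rw [adm_split_iff hσ hab h] at h1 h2 ⊢
    have h3 := hσ.2 x y z w hxy hyz hzw h1.1 h2.1
    refine ⟨h3, fun h4 => ?_⟩
    have := h1.2 h4
    have := h2.2 (h3.symm.trans h4)
    omega

lemma Gd.adm {n : ℕ} {σ : Equiv.Perm (Fin n)} (h : Gd σ) : Adm σ := by
  induction h with
  | base => exact adm_rotate
  | step σ a b hab h _ ih => exact adm_step ih hab h

lemma adm_inj {n : ℕ} {σ τ : Equiv.Perm (Fin n)} (hσ : Adm σ) (hτ : Adm τ)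
    (h : ∀ x y, σ.SameCycle x y ↔ τ.SameCycle x y) : σ = τ := by
  ext x
  have h1 := hσ.1 x (τ x) ((h _ _).2 (sc_apply _ _))
  have h2 := hτ.1 x (σ x) ((h _ _).1 (sc_apply _ _))
  unfold CBtw at *
  omega

lemma gd_of_list {n : ℕ} (hn : 0 < n) (l : List (Equiv.Perm (Fin n))) (hl : ∀ τ ∈ l, τ.IsSwap)
    (h : cyc (finRotate n * l.prod) = l.length + 1) : Gd (finRotate n * l.prod) := by
  induction l using List.reverseRecOn with
  | nil => simpa using Gd.base
  | append_singleton l t ih =>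
    have hl' : ∀ τ ∈ l, τ.IsSwap := fun τ hτ => hl τ (by simp [hτ])
    obtain ⟨a, b, hne, rfl⟩ := hl t (by simp)
    have h1 := (cyc_mul_list l hl' (finRotate n)).1
    rw [cyc_rotate hn] at h1
    rw [List.prod_append, List.prod_singleton, ← mul_assoc] at h ⊢
    rw [List.length_append, List.length_singleton] at h
    by_cases hab : (finRotate n * l.prod).SameCycle a b
    · have h2 := cyc_split _ hne hab
      have h3 := ih hl' (by omega)
      rcases lt_or_gt_of_ne (fun h => hne (Fin.ext h) : a.1 ≠ b.1) with h4 | h4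
      · exact Gd.step _ a b h4 hab h3
      · rw [swap_comm]
        exact Gd.step _ b a h4 hab.symm h3
    · have h2 := cyc_merge _ hab
      omega

lemma Gd.list {n : ℕ} (hn : 0 < n) {σ : Equiv.Perm (Fin n)} (h : Gd σ) :
    ∃ l : List (Equiv.Perm (Fin n)), (∀ τ ∈ l, τ.IsSwap) ∧ finRotate n * l.prod = σ ∧
      cyc σ = l.length + 1 := by
  induction h with
  | base => exact ⟨[], by simp, by simp, by simp [cyc_rotate hn]⟩
  | step σ a b hab h _ ih =>
    obtain ⟨l, h1, h2, h3⟩ := ih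
    have hne : a ≠ b := by rintro rfl; omega
    refine ⟨l ++ [swap a b], ?_, ?_, ?_⟩
    · intro τ hτ
      rw [List.mem_append, List.mem_singleton] at hτ
      rcases hτ with h | rfl
      · exact h1 τ h
      · exact ⟨a, b, hne, rfl⟩
    · rw [List.prod_append, List.prod_singleton, ← mul_assoc, h2]
    · rw [cyc_split σ hne h, h3]; simp

lemma swaps_inv {n : ℕ} (l : List (Equiv.Perm (Fin n))) (hl : ∀ τ ∈ l, τ.IsSwap) :
    l.reverse.prod = l.prod⁻¹ := by
  induction l with
  | nil => simp
  | cons t l ih =>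
    obtain ⟨a, b, hne, rfl⟩ := hl t (by simp)
    rw [List.reverse_cons, List.prod_append, ih (fun τ h => hl τ (by simp [h]))]
    simp

lemma geod_iff {n : ℕ} (hn : 0 < n) (σ : Equiv.Perm (Fin n)) :
    permLength σ + permLength (σ⁻¹ * finRotate n) = n - 1 ↔ Gd σ := by
  have e1 := permLength_eq σ
  constructor
  · intro h
    obtain ⟨l, h1, h2, h3⟩ := permLength_spec (σ⁻¹ * finRotate n)
    have h4 : finRotate n * l.reverse.prod = σ := by
      rw [swaps_inv l h1, h2]; group
    rw [← h4]
    apply gd_of_list hn _ (fun τ hτ => h1 τ (by simpa using hτ))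
    rw [h4, List.length_reverse]
    omega
  · intro h
    obtain ⟨l, h1, h2, h3⟩ := h.list hn
    have h4 : l.reverse.prod = σ⁻¹ * finRotate n := by
      rw [swaps_inv l h1, ← h2]; group
    have h5 := permLength_le l.reverse (fun τ hτ => h1 τ (by simpa using hτ))
    rw [h4, List.length_reverse] at h5
    obtain ⟨l', h6, h7, h8⟩ := permLength_spec (σ⁻¹ * finRotate n)
    have h9 := (cyc_mul_list l' h6 σ).2
    rw [h7, h8, mul_inv_cancel_left, cyc_rotate hn] at h9
    omega

/-! ### Every non-crossing relation comes from a geodesic -/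

lemma gd_of_nc {n : ℕ} (hn : 0 < n) (k : ℕ) (r : Setoid (Fin n)) (hk : Nat.card (Quotient r) = k)
    (hr : NCR r) : ∃ σ : Equiv.Perm (Fin n), Gd σ ∧ ∀ x y, σ.SameCycle x y ↔ r x y := by
  classical
  induction k generalizing r with
  | zero =>
    have : Nonempty (Quotient r) := ⟨Quotient.mk r ⟨0, hn⟩⟩
    have := Nat.card_pos (α := Quotient r)
    omega
  | succ k ih =>
    let z : Fin n := ⟨0, hn⟩
    by_cases hall : ∀ x, r z x
    · exact ⟨finRotate n, .base, fun x y => ⟨fun _ => r.trans (r.symm (hall x)) (hall y),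
        fun _ => rotate_sc x y⟩⟩
    push Not at hall
    have hex : ∃ m : ℕ, ∃ h : m < n, ¬ r z ⟨m, h⟩ := ⟨_, hall.choose.2, hall.choose_spec⟩
    obtain ⟨hmn, hm⟩ := Nat.find_spec hex
    have hmin : ∀ x : Fin n, x.1 < Nat.find hex → r z x := by
      intro x hx
      by_contra h
      exact Nat.find_min hex hx ⟨x.2, h⟩
    set m : Fin n := ⟨Nat.find hex, hmn⟩ with hmdef
    have hmin' : ∀ x : Fin n, x.1 < m.1 → r z x := hmin
    have hm0 : 0 < m.1 := by
      rcases Nat.eq_zero_or_pos m.1 with h | h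
      · exact absurd (show r z m from (show m = z from Fin.ext h) ▸ r.refl z) hm
      · exact h
    clear_value m
    let r' : Setoid (Fin n) :=
      { r := fun u v => r u v ∨ ((r z u ∨ r m u) ∧ (r z v ∨ r m v))
        iseqv := by
          refine ⟨fun x => Or.inl (r.refl x), ?_, ?_⟩
          · rintro x y (h | h)
            · exact Or.inl (r.symm h)
            · exact Or.inr ⟨h.2, h.1⟩
          · rintro x y w (h | h) (h' | h')
            · exact Or.inl (r.trans h h')
            · exact Or.inr ⟨h'.1.imp (fun e => r.trans e (r.symm h)) (fun e => r.trans e (r.symm h)),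
                h'.2⟩
            · exact Or.inr ⟨h.1, h.2.imp (fun e => r.trans e h') (fun e => r.trans e h')⟩
            · exact Or.inr ⟨h.1, h'.2⟩ }
    have hr'def : ∀ u v, r' u v ↔ r u v ∨ ((r z u ∨ r m u) ∧ (r z v ∨ r m v)) :=
      fun u v => Iff.rfl
    have hcard : Nat.card (Quotient r) = Nat.card (Quotient r') + 1 := by
      refine card_quot_split r' r z m (fun x y h => Or.inl h) (Or.inr ⟨.inl (r.refl _),
        .inr (r.refl _)⟩) hm ?_
      rintro x y (h | ⟨h1 | h1, h2 | h2⟩)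
      · exact Or.inl h
      · exact Or.inl (r.trans (r.symm h1) h2)
      · exact Or.inr (Or.inl ⟨r.symm h1, r.symm h2⟩)
      · exact Or.inr (Or.inr ⟨r.symm h1, r.symm h2⟩)
      · exact Or.inl (r.trans (r.symm h1) h2)
    have hD : ∀ v, ¬ (r z v ∨ r m v) → m.1 < v.1 := by
      intro v hv
      by_contra h
      rcases Nat.lt_or_eq_of_le (not_lt.1 h) with h' | h'
      · exact hv (Or.inl (hmin' v h'))
      · exact hv (Or.inr ((Fin.ext h' : v = m) ▸ r.refl v))
    have hz : z.1 = 0 := rfl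
    have hr' : NCR r' := by
      intro u v w t huv hvw hwt h1 h2
      rw [hr'def] at h1 h2 ⊢
      by_cases hv : r z v ∨ r m v
      · by_cases hu : r z u ∨ r m u
        · exact Or.inr ⟨hu, hv⟩
        · have hmu := hD u hu
          rcases h1 with h1 | h1
          · exfalso
            rcases hv with hv | hv
            · exact hu (Or.inl (hr z u v w (by omega) huv hvw hv h1))
            · exact hu (Or.inr (hr m u v w (by omega) huv hvw hv h1))
          · exact absurd h1.1 hu
      · have hmv := hD v hv
        rcases h2 with h2 | h2
        · rcases h1 with h1 | ⟨_, h1 | h1⟩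
          · exact Or.inl (hr u v w t huv hvw hwt h1 h2)
          · exact absurd (Or.inl (hr z v w t (by omega) hvw hwt h1 h2)) hv
          · exact absurd (Or.inr (hr m v w t (by omega) hvw hwt h1 h2)) hv
        · exact absurd h2.1 hv
    obtain ⟨σ, hσ, hσr⟩ := ih r' (by omega) hr'
    obtain ⟨b, hb, hbmax⟩ := (Finset.univ.filter (fun x => r m x)).exists_max_image
      (fun x => x.1) ⟨m, by simp⟩
    simp only [Finset.mem_filter, Finset.mem_univ, true_and] at hb hbmax
    have hmb := hbmax m (r.refl m)
    let a : Fin n := ⟨m.1 - 1, by omega⟩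
    have ha : a.1 = m.1 - 1 := rfl
    have hza : r z a := hmin' a (by omega)
    have hab : a.1 < b.1 := by omega
    have hsc : σ.SameCycle a b := (hσr _ _).2 (Or.inr ⟨Or.inl hza, Or.inr hb⟩)
    refine ⟨σ * swap a b, .step σ a b hab hsc hσ, fun x y => ?_⟩
    have hzm : ∀ x, r z x → r m x → False := fun x h1 h2 => hm (r.trans h1 (r.symm h2))
    have hin : ∀ x, r m x → a.1 < x.1 ∧ x.1 ≤ b.1 := by
      intro x hx
      refine ⟨?_, hbmax x hx⟩
      by_contra h
      exact hzm x (hmin' x (by omega)) hx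
    have hout : ∀ x, r z x → ¬ (a.1 < x.1 ∧ x.1 ≤ b.1) := by
      rintro x hx ⟨h1, h2⟩
      have h3 : x.1 ≠ m.1 := fun h => hm ((Fin.ext h : x = m) ▸ hx)
      have h4 : x.1 ≠ b.1 := fun h => hzm b ((Fin.ext h : x = b) ▸ hx) hb
      exact hm (hr z m x b (by omega) (by omega) (by omega) hx hb)
    rw [adm_split_iff hσ.adm hab hsc, hσr, hσr, hr'def, hr'def]
    constructor
    · rintro ⟨h1 | ⟨h1, h2⟩, h3⟩
      · exact h1
      · have := h3 (Or.inr ⟨h1, Or.inl hza⟩)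
        rcases h1 with h1 | h1 <;> rcases h2 with h2 | h2
        · exact r.trans (r.symm h1) h2
        · exact absurd (this.2 (hin y h2)) (hout x h1)
        · exact absurd (this.1 (hin x h1)) (hout y h2)
        · exact r.trans (r.symm h1) h2
    · intro h
      refine ⟨Or.inl h, fun h' => ?_⟩
      have hx : r z x ∨ r m x := by
        rcases h' with h' | h'
        · exact Or.inl (r.trans hza (r.symm h'))
        · exact h'.1
      rcases hx with hx | hx
      · exact iff_of_false (hout x hx) (hout y (r.trans hx h))
      · exact iff_of_true (hin x hx) (hin y (r.trans hx h))

/-! ### Counting non-crossing relations -/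

/-- block maximum functions on the interval `[a, a + n)` -/
def MaxFun (a n : ℕ) : Type :=
  {f : ℕ → ℕ // (∀ i, i < a ∨ a + n ≤ i → f i = i) ∧ (∀ i, i ≤ f i) ∧ (∀ i, f (f i) = f i) ∧
    (∀ i k, i ≤ k → k ≤ f i → f k ≤ f i) ∧ (∀ i, i < a + n → f i < a + n)}

/-- gluing block maximum functions -/
def glueFun (a n : ℕ) (q : Σ j : Fin (n + 1), MaxFun (a + 1) j × MaxFun (a + 1 + j) (n - j)) :
    MaxFun a (n + 1) :=
  ⟨fun i => if i = a then a + q.1 else if i ≤ a + q.1 then q.2.1.1 i else q.2.2.1 i, by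
    obtain ⟨⟨j, hj⟩, ⟨f, f1, f2, f3, f4, f5⟩, ⟨g, g1, g2, g3, g4, g5⟩⟩ := q
    change ∀ i, i < a + 1 ∨ a + 1 + j ≤ i → f i = i at f1
    change ∀ i, i < a + 1 + j → f i < a + 1 + j at f5
    change ∀ i, i < a + 1 + j ∨ a + 1 + j + (n - j) ≤ i → g i = i at g1
    change ∀ i, i < a + 1 + j + (n - j) → g i < a + 1 + j + (n - j) at g5
    simp only
    have hn : a + 1 + j + (n - j) = a + (n + 1) := by omega
    rw [hn] at g5 g1
    have fb : ∀ i, i ≤ a + j → f i ≤ a + j := fun i hi => by have := f5 i (by omega); omega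
    have haj : 0 < j → f (a + j) = a + j := fun h => by
      have := f2 (a + j); have := fb (a + j) le_rfl; omega
    refine ⟨?_, ?_, ?_, ?_, ?_⟩
    · intro i hi
      have := f1 i
      have := g1 i
      split_ifs <;> omega
    · intro i
      have := f2 i
      have := g2 i
      split_ifs <;> omega
    · intro i
      by_cases hi : i = a
      · simp only [hi, if_true]
        split_ifs with h1 h2
        · rfl
        · exact haj (by omega)
        · omega
      · simp only [hi, if_false]
        by_cases hi2 : i ≤ a + j
        · simp only [hi2, if_true]
          have h1 := fb i hi2
          by_cases hfa : f i = a
          · have := f1 i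
            have := f2 i
            omega
          · simp only [hfa, if_false, h1, if_true, f3]
        · simp only [hi2, if_false]
          have := g2 i
          rw [if_neg (by omega), if_neg (by omega), g3]
    · intro i k hik
      have e1 := f4 i k hik
      have e2 := g4 i k hik
      have e3 := f1 i
      have e4 := fb k
      have e5 := fb i
      have e6 := f1 k
      split_ifs <;> omega
    · intro i hi
      have := g5 i hi
      have := fb i
      split_ifs <;> omega⟩

lemma glueFun_bij (a n : ℕ) : Function.Bijective (glueFun a n) := by
  constructor
  · rintro ⟨⟨j, hj⟩, ⟨f, f1, f2, f3, f4, f5⟩, ⟨g, g1, g2, g3, g4, g5⟩⟩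
      ⟨⟨j', hj'⟩, ⟨f', f1', f2', f3', f4', f5'⟩, ⟨g', g1', g2', g3', g4', g5'⟩⟩ h
    have h' := fun i => congrFun (congrArg Subtype.val h) i
    simp only [glueFun] at h'
    have hjj : j = j' := by
      have := h' a
      simp only [if_true] at this
      omega
    subst hjj
    have hf : f = f' := by
      funext i
      have := h' i
      have := f1 i
      have := f1' i
      simp only at *
      split_ifs at * <;> omega
    have hg : g = g' := by
      funext i
      have := h' i
      have := g1 i
      have := g1' i
      simp only at *
      split_ifs at * <;> omega
    subst hf hg
    rfl
  · rintro ⟨f, f1, f2, f3, f4, f5⟩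
    have h1 := f2 a
    have h2 := f5 a (by omega)
    have e1 : a + (f a - a) = f a := by omega
    refine ⟨⟨⟨f a - a, by omega⟩, ⟨fun i => if a < i ∧ i ≤ f a then f i else i, ?_⟩,
      ⟨fun i => if f a < i then f i else i, ?_⟩⟩, ?_⟩
    · simp only
      have e2 : a + 1 + (f a - a) = f a + 1 := by omega
      rw [e2]
      have fb : ∀ i, a < i → i ≤ f a → f i ≤ f a := fun i h h' => f4 a i h.le h'
      refine ⟨?_, ?_, ?_, ?_, ?_⟩
      · intro i hi
        split_ifs <;> omega
      · intro i
        have := f2 i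
        split_ifs <;> omega
      · intro i
        by_cases hi : a < i ∧ i ≤ f a
        · simp only [hi, and_self, if_true]
          have := f2 i
          have := f3 i
          split_ifs <;> omega
        · simp only [hi, if_false]
      · intro i k hik
        have := f4 i k hik
        have := fb i
        have := fb k
        split_ifs <;> omega
      · intro i hi
        have := fb i
        split_ifs <;> omega
    · simp only
      have e2 : a + 1 + (f a - a) = f a + 1 := by omega
      have e3 : f a + 1 + (n - (f a - a)) = a + (n + 1) := by omega
      rw [e2, e3]
      refine ⟨?_, ?_, ?_, ?_, ?_⟩
      · intro i hi
        have := f1 i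
        split_ifs <;> omega
      · intro i
        have := f2 i
        split_ifs <;> omega
      · intro i
        by_cases hi : f a < i
        · simp only [hi, if_true]
          have := f2 i
          have := f3 i
          split_ifs <;> omega
        · simp only [hi, if_false]
      · intro i k hik
        have := f4 i k hik
        split_ifs <;> omega
      · intro i hi
        have := f5 i
        split_ifs <;> omega
    · apply Subtype.ext
      funext i
      simp only [glueFun]
      rw [e1]
      by_cases hi : i = a
      · simp [hi]
      · have := f1 i
        split_ifs <;> omega

lemma card_maxFun (n : ℕ) : ∀ a, Finite (MaxFun a n) ∧ Nat.card (MaxFun a n) = catalan n := by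
  induction n using Nat.strong_induction_on with
  | _ n ih =>
    obtain _ | n := n
    · intro a
      have hu : ∀ x : MaxFun a 0, x.1 = id := fun x => by
        funext i
        exact x.2.1 i (by omega)
      have : Subsingleton (MaxFun a 0) := ⟨fun x y => Subtype.ext ((hu x).trans (hu y).symm)⟩
      have : Nonempty (MaxFun a 0) := ⟨⟨id, fun _ _ => rfl, fun _ => le_rfl, fun _ => rfl,
        fun _ _ _ h => h, fun _ h => h⟩⟩
      refine ⟨inferInstance, ?_⟩
      rw [catalan_zero, Nat.card_eq_one_iff_unique]
      exact ⟨inferInstance, inferInstance⟩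
    · intro a
      have i1 : ∀ j : Fin (n + 1), Finite (MaxFun (a + 1) j) := fun j => (ih j (by omega) _).1
      have i2 : ∀ j : Fin (n + 1), Finite (MaxFun (a + 1 + j) (n - j)) :=
        fun j => (ih (n - j) (by omega) _).1
      have e := Equiv.ofBijective _ (glueFun_bij a n)
      refine ⟨Finite.of_equiv _ e, ?_⟩
      rw [← Nat.card_congr e, Nat.card_sigma, catalan_succ]
      refine Finset.sum_congr rfl fun j _ => ?_
      rw [Nat.card_prod, (ih j (by omega) _).2, (ih (n - j) (by omega) _).2]

lemma exists_mx_s5 {n : ℕ} (r : Setoid (Fin n)) (x : Fin n) :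
    ∃ y, r x y ∧ ∀ w, r x w → w.1 ≤ y.1 := by
  classical
  obtain ⟨b, hb, hbmax⟩ := (Finset.univ.filter (fun w => r x w)).exists_max_image
      (fun w => w.1) ⟨x, by simp⟩
  simp only [Finset.mem_filter, Finset.mem_univ, true_and] at hb hbmax
  exact ⟨b, hb, hbmax⟩

lemma card_ncr (n : ℕ) : Nat.card {r : Setoid (Fin n) // NCR r} = catalan n := by
  rw [← (card_maxFun n 0).2]
  let G : MaxFun 0 n → {r : Setoid (Fin n) // NCR r} := fun f =>
    ⟨Setoid.ker (fun x : Fin n => f.1 x.1), by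
      obtain ⟨f, f1, f2, f3, f4, f5⟩ := f
      intro a b c d hab hbc hcd h1 h2
      have h1 : f a = f c := h1
      have h2 : f b = f d := h2
      show f a = f b
      have := f2 c
      have := f2 d
      have := f4 a b (by omega) (by omega)
      have := f4 b c (by omega) (by omega)
      omega⟩
  refine (Nat.card_congr (Equiv.ofBijective G ⟨?_, ?_⟩)).symm
  · rintro ⟨f, f1, f2, f3, f4, f5⟩ ⟨g, g1, g2, g3, g4, g5⟩ h
    have hfg : ∀ x y : Fin n, f x = f y ↔ g x = g y := by
      intro x y
      have := congrArg Subtype.val h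
      exact Setoid.ext_iff.1 this x y
    apply Subtype.ext
    funext i
    simp only
    by_cases hi : i < n
    · have a1 := f5 i (by omega)
      have a2 := g5 i (by omega)
      have b1 := (hfg ⟨i, hi⟩ ⟨f i, by omega⟩).1 (f3 i).symm
      have b2 := (hfg ⟨i, hi⟩ ⟨g i, by omega⟩).2 (g3 i).symm
      simp only at b1 b2
      have := f2 (g i)
      have := g2 (f i)
      omega
    · rw [f1 i (by omega), g1 i (by omega)]
  · rintro ⟨r, hr⟩
    choose mx h1 h2 using exists_mx_s5 r
    have h3 : ∀ x y, r x y → mx x = mx y := by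
      intro x y h
      apply Fin.ext
      have := h2 x (mx y) (r.trans h (h1 y))
      have := h2 y (mx x) (r.trans (r.symm h) (h1 x))
      omega
    let f : ℕ → ℕ := fun i => if h : i < n then (mx ⟨i, h⟩).1 else i
    have hf : ∀ x : Fin n, f x.1 = (mx x).1 := fun x => by simp [f]
    have hf' : ∀ i, ¬ i < n → f i = i := fun i hi => by simp [f, hi]
    clear_value f
    refine ⟨⟨f, ?_, ?_, ?_, ?_, ?_⟩, ?_⟩
    · intro i hi
      exact hf' i (by omega)
    · intro i
      by_cases hi : i < n
      · have := hf ⟨i, hi⟩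
        have := h2 ⟨i, hi⟩ _ (r.refl _)
        simp only at *
        omega
      · exact (hf' i hi).ge
    · intro i
      by_cases hi : i < n
      · have := hf ⟨i, hi⟩
        simp only at this
        rw [this, hf, ← h3 _ _ (h1 ⟨i, hi⟩)]
      · rw [hf' i hi, hf' i hi]
    · intro i k hik hk
      by_cases hi : i < n
      · have e1 := hf ⟨i, hi⟩
        simp only at e1
        have hkn : k < n := by have := (mx ⟨i, hi⟩).2; omega
        have e2 := hf ⟨k, hkn⟩
        simp only at e2
        by_contra hlt
        rcases Nat.lt_or_eq_of_le hik with h4 | h4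
        · rcases Nat.lt_or_eq_of_le hk with h5 | h5
          · have := hr ⟨i, hi⟩ ⟨k, hkn⟩ (mx ⟨i, hi⟩) (mx ⟨k, hkn⟩) h4 (by simp only; omega)
              (by omega) (h1 _) (h1 _)
            have := h3 _ _ this
            rw [this] at e1
            omega
          · have : mx ⟨i, hi⟩ = ⟨k, hkn⟩ := Fin.ext (by simp only; omega)
            have h6 := h3 _ _ (h1 ⟨i, hi⟩)
            rw [this] at h6
            have h7 := congrArg Fin.val h6
            simp only at h7
            omega
        · subst h4
          omega
      · rw [hf' i hi] at hk ⊢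
        have : k = i := by omega
        rw [this, hf' i hi]
    · intro i hi
      have := hf ⟨i, by omega⟩
      have := (mx ⟨i, by omega⟩).2
      simp only at *
      omega
    · apply Subtype.ext
      apply Setoid.ext
      intro x y
      show f x.1 = f y.1 ↔ r x y
      rw [hf, hf]
      constructor
      · intro h
        have h : mx x = mx y := Fin.ext h
        exact r.trans (h1 x) (h ▸ r.symm (h1 y))
      · intro h
        rw [h3 _ _ h]

/-! ### The bijection -/

lemma finpartition_ext {n : ℕ} {P Q : Finpartition (Finset.univ : Finset (Fin n))}
    (h : ∀ x, P.part x = Q.part x) : P = Q := by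
  have key : ∀ P Q : Finpartition (Finset.univ : Finset (Fin n)),
      (∀ x, P.part x = Q.part x) → P.parts ⊆ Q.parts := by
    intro P Q h X hX
    obtain ⟨x, hx⟩ := P.nonempty_of_mem_parts hX
    rw [← P.part_eq_of_mem hX hx, h x]
    exact Q.part_mem.2 (Finset.mem_univ x)
  exact Finpartition.ext (Finset.Subset.antisymm (key P Q h) (key Q P fun x => (h x).symm))

lemma mem_part_orbit {n : ℕ} (σ : Equiv.Perm (Fin n)) (x y : Fin n) :
    y ∈ (orbitPartition σ).part x ↔ σ.SameCycle x y :=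
  Finpartition.mem_part_ofSetoid_iff_rel

lemma nonCrossing_iff {n : ℕ} (P : Finpartition (Finset.univ : Finset (Fin n))) :
    IsNonCrossing P ↔ NCR (fun x y => y ∈ P.part x) := by
  have hmem : ∀ x, x ∈ P.part x := fun x => P.mem_part (Finset.mem_univ x)
  have hpart : ∀ x, P.part x ∈ P.parts := fun x => P.part_mem.2 (Finset.mem_univ x)
  constructor
  · intro h a b c d hab hbc hcd h1 h2
    by_contra hn
    exact h ⟨a, b, c, d, P.part a, P.part b, hpart a, hpart b,
      fun e => hn (by rw [e]; exact hmem b), hab, hbc, hcd, hmem a, h1, hmem b, h2⟩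
  · rintro h ⟨a, b, c, d, X, Y, hX, hY, hne, hab, hbc, hcd, ha, hc, hb, hd⟩
    have eX := P.part_eq_of_mem hX ha
    have eY := P.part_eq_of_mem hY hb
    have := h a b c d hab hbc hcd (by simpa only [eX] using hc) (by simpa only [eY] using hd)
    simp only [eX] at this
    exact hne (by rw [← P.part_eq_of_mem hX this, eY])

/-- **Geodesic permutations are in bijection with non-crossing partitions.** The permutations
`σ ∈ S_p` with `|σ| + |σ⁻¹γ| = p − 1` (where `γ = (1 2 … p)`) are in bijection with `NC(p)`
via `σ ↦ [σ]` (orbits of `σ`); in particular their number is the Catalan number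
`(1/(p+1)) * choose (2p) p`. -/
theorem geodesics_equiv_noncrossing (p : ℕ) (hp : 0 < p) :
    (∃ e : {σ : Equiv.Perm (Fin p) //
          permLength σ + permLength (σ⁻¹ * finRotate p) = p - 1} ≃
        {P : Finpartition (Finset.univ : Finset (Fin p)) // IsNonCrossing P},
      ∀ σ, ((e σ : {P : Finpartition (Finset.univ : Finset (Fin p)) // IsNonCrossing P}) :
          Finpartition (Finset.univ : Finset (Fin p))) = orbitPartition σ.val) ∧
    (p + 1) * Nat.card {σ : Equiv.Perm (Fin p) //
        permLength σ + permLength (σ⁻¹ * finRotate p) = p - 1} = Nat.choose (2 * p) p := by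
  constructor
  · let F : {σ : Equiv.Perm (Fin p) //
          permLength σ + permLength (σ⁻¹ * finRotate p) = p - 1} →
        {P : Finpartition (Finset.univ : Finset (Fin p)) // IsNonCrossing P} := fun σ =>
      ⟨orbitPartition σ.1, by
        rw [nonCrossing_iff]
        have h := ((geod_iff hp σ.1).1 σ.2).adm.2
        intro a b c d hab hbc hcd h1 h2
        rw [mem_part_orbit] at *
        exact h a b c d hab hbc hcd h1 h2⟩
    refine ⟨Equiv.ofBijective F ⟨?_, ?_⟩, fun σ => rfl⟩
    · intro σ τ h
      apply Subtype.ext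
      refine adm_inj ((geod_iff hp σ.1).1 σ.2).adm ((geod_iff hp τ.1).1 τ.2).adm fun x y => ?_
      have h' : orbitPartition σ.1 = orbitPartition τ.1 := congrArg Subtype.val h
      rw [← mem_part_orbit, ← mem_part_orbit, h']
    · rintro ⟨P, hP⟩
      have hmem : ∀ x, x ∈ P.part x := fun x => P.mem_part (Finset.mem_univ x)
      have hk : ∀ x y, Setoid.ker P.part x y ↔ y ∈ P.part x := by
        intro x y
        constructor
        · intro h
          have h : P.part x = P.part y := h
          rw [h]; exact hmem y
        · intro h
          exact (P.part_eq_of_mem (P.part_mem.2 (Finset.mem_univ x)) h).symm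
      obtain ⟨σ, hσ, hr⟩ := gd_of_nc hp _ (Setoid.ker P.part) rfl (by
        intro a b c d hab hbc hcd h1 h2
        rw [hk] at *
        exact (nonCrossing_iff P).1 hP a b c d hab hbc hcd h1 h2)
      refine ⟨⟨σ, (geod_iff hp σ).2 hσ⟩, Subtype.ext (finpartition_ext fun x => ?_)⟩
      ext y
      show y ∈ (orbitPartition σ).part x ↔ _
      rw [mem_part_orbit, hr, hk]
  · rw [← Nat.centralBinom_eq_two_mul_choose, ← succ_mul_catalan_eq_centralBinom, ← card_ncr]
    congr 1
    let F : {σ : Equiv.Perm (Fin p) //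
          permLength σ + permLength (σ⁻¹ * finRotate p) = p - 1} →
        {r : Setoid (Fin p) // NCR r} := fun σ =>
      ⟨sameCycleSetoid σ.1, ((geod_iff hp σ.1).1 σ.2).adm.2⟩
    refine Nat.card_congr (Equiv.ofBijective F ⟨?_, ?_⟩)
    · intro σ τ h
      apply Subtype.ext
      refine adm_inj ((geod_iff hp σ.1).1 σ.2).adm ((geod_iff hp τ.1).1 τ.2).adm fun x y => ?_
      exact Setoid.ext_iff.1 (congrArg Subtype.val h) x y
    · rintro ⟨r, hr⟩
      obtain ⟨σ, hσ, h⟩ := gd_of_nc hp _ r rfl hr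
      exact ⟨⟨σ, (geod_iff hp σ).2 hσ⟩, Subtype.ext (Setoid.ext fun x y => h x y)⟩
end

section
/- For positive integers s and p, the number of s-tuples (σ₁,...,σ_s) of non-crossing partitions of [p] forming a chain σ₁ ≤ σ₂ ≤ ... ≤ σ_s equals the number of (s+1)-tuples obtained by counting multichains in NC(p), and is given by the explicit product formula FC^(s)_p = ∏_{j=1}^{p-1} (sp + p + 1 − j)/(sp + 1 + j) · ... — equivalently FC^(s)_p = binomial((s+1)p, p)/(sp+1). In particular FC^(1)_p is the Catalan number and FC^(s)_1 = 1 for all s. -/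
open Equiv Finset MeasureTheory

structure NCRel (a b : ℕ) (r : ℕ → ℕ → Prop) : Prop where
  refl : ∀ x, r x x
  symm : ∀ x y, r x y → r y x
  trans : ∀ x y z, r x y → r y z → r x z
  supp : ∀ x y, r x y → x ≠ y → a ≤ x ∧ x < b
  nc : ∀ x y z w, x < y → y < z → z < w → r x z → r y w → r x y

def NCCh (s a b : ℕ) : Set (Fin s → ℕ → ℕ → Prop) :=
  {R | (∀ i, NCRel a b (R i)) ∧ ∀ i j, i ≤ j → ∀ x y, R i x y → R j x y}

def NCD (s j b : ℕ) : Set (Fin s → ℕ → ℕ → Prop) :=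
  {R | R ∈ NCCh s 0 b ∧ ∀ i : Fin s, i.val < j → ∀ y, R i 0 y → y = 0}

instance finNCCh (s a b : ℕ) : Finite (NCCh s a b) := by
  let f : NCCh s a b → (Fin s → Fin b → Fin b → Prop) := fun R i x y => R.1 i x y
  apply Finite.of_injective f
  rintro ⟨R, hR⟩ ⟨S, hS⟩ h
  ext i x y
  have key : ∀ x y (hx : x < b) (hy : y < b), R i x y ↔ S i x y := by
    intro x y hx hy
    have := congrFun (congrFun (congrFun h i) ⟨x, hx⟩) ⟨y, hy⟩
    exact iff_of_eq this
  by_cases hxy : x = y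
  · subst hxy
    exact ⟨fun _ => (hS.1 i).refl _, fun _ => (hR.1 i).refl _⟩
  constructor
  · intro h
    exact (key x y ((hR.1 i).supp x y h hxy).2 ((hR.1 i).supp y x ((hR.1 i).symm _ _ h) (Ne.symm hxy)).2).1 h
  · intro h
    exact (key x y ((hS.1 i).supp x y h hxy).2 ((hS.1 i).supp y x ((hS.1 i).symm _ _ h) (Ne.symm hxy)).2).2 h

instance finNCD (s j b : ℕ) : Finite (NCD s j b) :=
  Finite.Set.subset (NCCh s 0 b) (fun _ h => h.1)

theorem NCCh_shift (s m c : ℕ) : Nat.card (NCCh s c (m + c)) = Nat.card (NCCh s 0 m) := by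
  let up : (ℕ → ℕ → Prop) → ℕ → ℕ → Prop := fun r x y =>
    x = y ∨ (c ≤ x ∧ c ≤ y ∧ r (x - c) (y - c))
  apply Nat.card_congr
  refine ⟨fun R => ⟨fun i x y => R.1 i (x + c) (y + c), ?_⟩, fun R => ⟨fun i => up (R.1 i), ?_⟩, ?_, ?_⟩
  · obtain ⟨R, h1, h2⟩ := R
    refine ⟨fun i => ⟨fun x => (h1 i).refl _, fun x y => (h1 i).symm _ _, fun x y z => (h1 i).trans _ _ _, ?_, ?_⟩, fun i j h x y => h2 i j h _ _⟩
    · intro x y h hne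
      have := (h1 i).supp _ _ h (by omega)
      omega
    · intro x y z w a1 a2 a3 
      exact (h1 i).nc _ _ _ _ (by omega) (by omega) (by omega)
  · obtain ⟨R, h1, h2⟩ := R
    refine ⟨fun i => ⟨fun x => Or.inl rfl, ?_, ?_, ?_, ?_⟩, ?_⟩
    · rintro x y (h | ⟨a1, a2, h⟩)
      · exact Or.inl h.symm
      · exact Or.inr ⟨a2, a1, (h1 i).symm _ _ h⟩
    · rintro x y z (h | ⟨a1, a2, h⟩) h'
      · subst h; exact h'
      · rcases h' with h' | ⟨a3, a4, h'⟩
        · subst h'; exact Or.inr ⟨a1, a2, h⟩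
        · exact Or.inr ⟨a1, a4, (h1 i).trans _ _ _ h h'⟩
    · rintro x y (h | ⟨a1, a2, h⟩) hne
      · exact absurd h hne
      · have := (h1 i).supp _ _ h (by omega)
        omega
    · rintro x y z w l1 l2 l3 (h | ⟨a1, a2, h⟩) (h' | ⟨a3, a4, h'⟩)
      · omega
      · omega
      · omega
      · exact Or.inr ⟨a1, a3, (h1 i).nc _ _ _ _ (by omega) (by omega) (by omega) h h'⟩
    · rintro i j hij x y (h | ⟨a1, a2, h⟩)
      · exact Or.inl h
      · exact Or.inr ⟨a1, a2, h2 i j hij _ _ h⟩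
  · rintro ⟨R, h1, h2⟩
    ext i x y
    simp only [up]
    constructor
    · rintro (h | ⟨a1, a2, h⟩)
      · subst h; exact (h1 i).refl _
      · rwa [Nat.sub_add_cancel a1, Nat.sub_add_cancel a2] at h
    · intro h
      by_cases hxy : x = y
      · exact Or.inl hxy
      have b1 := (h1 i).supp _ _ h hxy
      have b2 := (h1 i).supp _ _ ((h1 i).symm _ _ h) (Ne.symm hxy)
      refine Or.inr ⟨b1.1, b2.1, ?_⟩
      rwa [Nat.sub_add_cancel b1.1, Nat.sub_add_cancel b2.1]
  · rintro ⟨R, h1, h2⟩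
    ext i x y
    simp only [up, Nat.add_sub_cancel]
    constructor
    · rintro (h | ⟨a1, a2, h⟩)
      · have : x = y := by omega
        subst this; exact (h1 i).refl _
      · exact h
    · intro h
      exact Or.inr ⟨by omega, by omega, h⟩

theorem NCD_top (s n : ℕ) : NCD s s (n + 1) = NCCh s 1 (n + 1) := by
  ext R
  constructor
  · rintro ⟨⟨h1, h2⟩, h3⟩
    refine ⟨fun i => ⟨(h1 i).refl, (h1 i).symm, (h1 i).trans, ?_, (h1 i).nc⟩, h2⟩
    intro x y h hne
    refine ⟨?_, ((h1 i).supp _ _ h hne).2⟩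
    rcases Nat.eq_zero_or_pos x with rfl | hx
    · exact absurd (h3 i i.2 y h).symm hne
    · exact hx
  · rintro ⟨h1, h2⟩
    refine ⟨⟨fun i => ⟨(h1 i).refl, (h1 i).symm, (h1 i).trans, ?_, (h1 i).nc⟩, h2⟩, ?_⟩
    · intro x y h hne
      exact ⟨Nat.zero_le _, ((h1 i).supp _ _ h hne).2⟩
    · intro i _ y h
      by_contra hne
      have := (h1 i).supp _ _ h (fun h => hne h.symm)
      omega

theorem NCD_zero (s b : ℕ) : NCD s 0 b = NCCh s 0 b := by
  ext R
  simp [NCD]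

theorem NCCh_zero (s : ℕ) : Nat.card (NCCh s 0 0) = 1 := by
  rw [Nat.card_eq_one_iff_unique]
  constructor
  · constructor
    rintro ⟨R, h1, h2⟩ ⟨S, g1, g2⟩
    ext i x y
    by_cases hxy : x = y
    · subst hxy
      exact ⟨fun _ => (g1 i).refl _, fun _ => (h1 i).refl _⟩
    · constructor
      · intro h
        have := (h1 i).supp _ _ h hxy
        omega
      · intro h
        have := (g1 i).supp _ _ h hxy
        omega
  · exact ⟨⟨fun _ x y => x = y, fun i => ⟨fun x => rfl, fun x y h => h.symm, fun x y z h h' => h.trans h', fun x y h h' => absurd h h', fun x y z w _ _ _ h => by omega⟩, fun _ _ _ _ _ h => h⟩⟩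

/-- glueing -/
def ncGlue (s j k b : ℕ) (T U : Fin s → ℕ → ℕ → Prop) : Fin s → ℕ → ℕ → Prop :=
  fun i x y => T i x y ∨ U i x y ∨
    (j ≤ i.val ∧ k < b ∧ (T i 0 x ∧ U i k y ∨ T i 0 y ∧ U i k x))

theorem ncGlue_mem (s j k b : ℕ) (hk : 0 < k) (hkb : k ≤ b) (T U : Fin s → ℕ → ℕ → Prop)
    (hT : T ∈ NCD s (j + 1) k) (hU : U ∈ NCCh s k b) : ncGlue s j k b T U ∈ NCD s j b := by
  obtain ⟨⟨t1, t2⟩, t3⟩ := hT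
  obtain ⟨u1, u2⟩ := hU
  refine ⟨⟨fun i => ?_, ?_⟩, ?_⟩
  · have tr := (t1 i).refl
    have ts := (t1 i).symm
    have tt := (t1 i).trans
    have tp := (t1 i).supp
    have tn := (t1 i).nc
    have ur := (u1 i).refl
    have us := (u1 i).symm
    have ut := (u1 i).trans
    have up := (u1 i).supp
    have un := (u1 i).nc
    clear t1 t2 u1 u2 t3
    have tlt : ∀ x y, T i x y → x ≠ y → x < k ∧ y < k := fun x y h hne =>
      ⟨(tp x y h hne).2, (tp y x (ts _ _ h) hne.symm).2⟩
    have ult : ∀ x y, U i x y → x ≠ y → (k ≤ x ∧ x < b) ∧ k ≤ y ∧ y < b := fun x y h hne =>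
      ⟨up x y h hne, up y x (us _ _ h) hne.symm⟩
    have t0 : ∀ x, T i 0 x → x < k := by
      intro x h
      rcases Nat.eq_zero_or_pos x with rfl | hx
      · exact hk
      · exact (tlt 0 x h (by omega)).2
    have uk : k < b → ∀ x, U i k x → k ≤ x ∧ x < b := by
      intro hlt x h
      by_cases hx : k = x
      · omega
      · exact (ult k x h hx).2
    clear tp up
    refine ⟨fun x => Or.inl (tr x), ?_, ?_, ?_, ?_⟩
    · intro x y
      unfold ncGlue
      clear tn un tt ut
      grind
    · intro x y z h h'
      clear tn un
      by_cases hxy : x = y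
      · subst hxy
        exact h'
      by_cases hyz : y = z
      · subst hyz
        exact h
      unfold ncGlue at *
      rcases h with h | h | ⟨hj, hb, ⟨h, g⟩ | ⟨h, g⟩⟩ <;>
      rcases h' with h' | h' | ⟨hj', hb', ⟨h', g'⟩ | ⟨h', g'⟩⟩
      · exact Or.inl (tt _ _ _ h h')
      · have := tlt _ _ h hxy
        have := ult _ _ h' hyz
        omega
      · exact Or.inr (Or.inr ⟨hj', hb', Or.inl ⟨tt _ _ _ h' (ts _ _ h), g'⟩⟩)
      · have := tlt _ _ h hxy
        have := uk hb' _ g'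
        omega
      · have := ult _ _ h hxy
        have := tlt _ _ h' hyz
        omega
      · exact Or.inr (Or.inl (ut _ _ _ h h'))
      · have := ult _ _ h hxy
        have := t0 _ h'
        omega
      · exact Or.inr (Or.inr ⟨hj', hb', Or.inr ⟨h', ut _ _ _ g' (us _ _ h)⟩⟩)
      · have := uk hb _ g
        have := tlt _ _ h' hyz
        omega
      · exact Or.inr (Or.inr ⟨hj, hb, Or.inl ⟨h, ut _ _ _ g h'⟩⟩)
      · have := uk hb _ g
        have := t0 _ h'
        omega
      · exact Or.inl (tt _ _ _ (ts _ _ h) h')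
      · exact Or.inr (Or.inr ⟨hj, hb, Or.inr ⟨tt _ _ _ h h', g⟩⟩)
      · have := t0 _ h
        have := ult _ _ h' hyz
        omega
      · exact Or.inr (Or.inl (ut _ _ _ (us _ _ g) g'))
      · have := t0 _ h
        have := uk hb _ g'
        omega
    · intro x y h hne
      refine ⟨Nat.zero_le _, ?_⟩
      unfold ncGlue at h
      rcases h with h | h | ⟨hj, hb, ⟨h, g⟩ | ⟨h, g⟩⟩
      · have := tlt _ _ h hne
        omega
      · exact (ult _ _ h hne).1.2
      · have := t0 _ h
        omega
      · exact (uk hb _ g).2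
    · intro x y z w l1 l2 l3 h h'
      unfold ncGlue at *
      rcases h with h | h | ⟨hj, hb, ⟨h, g⟩ | ⟨h, g⟩⟩ <;>
      rcases h' with h' | h' | ⟨hj', hb', ⟨h', g'⟩ | ⟨h', g'⟩⟩
      · exact Or.inl (tn x y z w l1 l2 l3 h h')
      · have := tlt _ _ h (by omega)
        have := ult _ _ h' (by omega)
        omega
      · rcases Nat.eq_zero_or_pos x with rfl | hx
        · exact Or.inl h'
        · have := tn 0 x y z hx l1 l2 h' h
          exact Or.inl (tt _ _ _ (ts _ _ this) h')
      · have := t0 _ h'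
        have := uk hb' _ g'
        omega
      · have := ult _ _ h (by omega)
        have := tlt _ _ h' (by omega)
        omega
      · exact Or.inr (Or.inl (un x y z w l1 l2 l3 h h'))
      · have := ult _ _ h (by omega)
        have := t0 _ h'
        omega
      · have := t0 _ h'
        have := uk hb' _ g'
        omega
      · have := uk hb _ g
        have := tlt _ _ h' (by omega)
        omega
      · have h2 := ult _ _ h' (by omega)
        have : U i k y := by
          by_cases hky : k = y
          · subst hky
            exact ur _
          · exact un k y z w (by omega) l2 l3 g h'
        exact Or.inr (Or.inr ⟨hj, hb, Or.inl ⟨h, this⟩⟩)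
      · exact Or.inl (tt _ _ _ (ts _ _ h) h')
      · have := t0 _ h'
        have := uk hb' _ g'
        omega
      all_goals
        have := t0 _ h
        have := uk hb _ g
        omega
  · intro i i' hii x y
    have := t2 i i' hii
    have := u2 i i' hii
    have : i.val ≤ i'.val := hii
    unfold ncGlue
    grind
  · intro i hi y
    have := t3 i (by omega)
    have := (u1 i).supp 0 y
    unfold ncGlue
    grind

def ncRes (lo hi : ℕ) (r : ℕ → ℕ → Prop) : ℕ → ℕ → Prop := fun x y =>
  x = y ∨ (r x y ∧ lo ≤ x ∧ x < hi ∧ lo ≤ y ∧ y < hi)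

theorem ncRes_ncGlue_left (s j k b : ℕ) (hk : 0 < k) (T U : Fin s → ℕ → ℕ → Prop)
    (hT : T ∈ NCD s (j + 1) k) (hU : U ∈ NCCh s k b) (i : Fin s) :
    ncRes 0 k (ncGlue s j k b T U i) = T i := by
  ext x y
  have t := hT.1.1 i
  have u := hU.1 i
  have := t.supp x y
  have := t.supp y x
  have := t.symm x y
  have := t.refl x
  have := u.supp x y
  have := u.supp x k
  have := u.supp y k
  have := u.symm k x
  have := u.symm k y
  unfold ncRes ncGlue
  grind

theorem ncRes_ncGlue_right (s j k b : ℕ) (hk : 0 < k) (T U : Fin s → ℕ → ℕ → Prop)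
    (hT : T ∈ NCD s (j + 1) k) (hU : U ∈ NCCh s k b) (i : Fin s) :
    ncRes k b (ncGlue s j k b T U i) = U i := by
  ext x y
  have t := hT.1.1 i
  have u := hU.1 i
  have := u.supp x y
  have := u.supp y x
  have := u.symm x y
  have := u.refl x
  have := t.supp x y
  have := t.supp x 0
  have := t.supp y 0
  have := t.symm 0 x
  have := t.symm 0 y
  unfold ncRes ncGlue
  grind

theorem ncRes_mem (s a b lo hi : ℕ) (R : Fin s → ℕ → ℕ → Prop) (hR : R ∈ NCCh s a b) :
    (fun i => ncRes lo hi (R i)) ∈ NCCh s lo hi := by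
  obtain ⟨h1, h2⟩ := hR
  refine ⟨fun i => ?_, ?_⟩
  · have ts := (h1 i).symm
    have tt := (h1 i).trans
    have tn := (h1 i).nc
    unfold ncRes
    refine ⟨?_, ?_, ?_, ?_, ?_⟩ <;> grind
  · intro i j hij x y
    have := h2 i j hij x y
    unfold ncRes
    grind

theorem ncGlue_next (s j k b : ℕ) (hj : j < s) (hk : 0 < k) (T U : Fin s → ℕ → ℕ → Prop)
    (hT : T ∈ NCD s (j + 1) k) (hU : U ∈ NCCh s k b) :
    (∀ x, 0 < x → x < k → ¬ ncGlue s j k b T U ⟨j, hj⟩ 0 x) ∧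
    (k < b → ncGlue s j k b T U ⟨j, hj⟩ 0 k) := by
  constructor
  · intro x hx hxk
    have t3 := hT.2 ⟨j, hj⟩ (Nat.lt_succ_self j)
    have u := (hU.1 ⟨j, hj⟩).supp
    have us := (hU.1 ⟨j, hj⟩).symm
    unfold ncGlue
    grind
  · intro hkb
    exact Or.inr (Or.inr ⟨le_refl _, hkb, Or.inl ⟨(hT.1.1 _).refl _, (hU.1 _).refl _⟩⟩)

theorem ncGlue_surj (s j b : ℕ) (hj : j < s) (hb : 0 < b) (R : Fin s → ℕ → ℕ → Prop)
    (hR : R ∈ NCD s j b) : ∃ k, 0 < k ∧ k ≤ b ∧ (fun i => ncRes 0 k (R i)) ∈ NCD s (j + 1) k ∧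
      ncGlue s j k b (fun i => ncRes 0 k (R i)) (fun i => ncRes k b (R i)) = R := by
  classical
  have hex : ∃ k, 0 < k ∧ (R ⟨j, hj⟩ 0 k ∨ k = b) := ⟨b, hb, Or.inr rfl⟩
  obtain ⟨hk0, hk⟩ := Nat.find_spec hex
  have hmin : ∀ m, m < Nat.find hex → ¬ (0 < m ∧ (R ⟨j, hj⟩ 0 m ∨ m = b)) :=
    fun m hm => Nat.find_min hex hm
  have hkb : Nat.find hex ≤ b := Nat.find_min' hex ⟨hb, Or.inr rfl⟩
  generalize Nat.find hex = k at *
  obtain ⟨⟨h1, h2⟩, h3⟩ := hR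
  have hres := ncRes_mem s 0 b 0 k R ⟨h1, h2⟩
  refine ⟨k, hk0, hkb, ⟨hres, ?_⟩, ?_⟩
  · intro i hi y hy
    have hij : i ≤ ⟨j, hj⟩ := by
      show i.val ≤ j
      omega
    have := h2 i _ hij 0 y
    have := hmin y
    unfold ncRes at hy
    grind
  · ext i x y
    have rr := (h1 i).refl
    have rs := (h1 i).symm
    have rt := (h1 i).trans
    have rp := (h1 i).supp
    have rn := (h1 i).nc
    -- cross relation
    have cross : ∀ x y, x < k → k ≤ y → R i x y → j ≤ i.val ∧ k < b ∧ R i 0 x ∧ R i k y := by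
      intro x y hx hy h
      have hyb : y < b := (rp y x (rs _ _ h) (by omega)).2
      have hkk : R ⟨j, hj⟩ 0 k := by
        rcases hk with h | h
        · exact h
        · omega
      by_cases hij : j ≤ i.val
      · have hik : R i 0 k := h2 ⟨j, hj⟩ i hij _ _ hkk
        have h0x : R i 0 x := by
          rcases Nat.eq_zero_or_pos x with rfl | hx0
          · exact rr _
          rcases Nat.lt_or_ge k y with hky | hky
          · exact rn 0 x k y hx0 hx hky hik h
          · have : y = k := by omega
            subst this
            exact rt _ _ _ hik (rs _ _ h)
        exact ⟨hij, by omega, h0x, rt _ _ _ (rs _ _ hik) (rt _ _ _ h0x h)⟩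
      · exfalso
        have hx0 : 0 < x := by
          rcases Nat.eq_zero_or_pos x with rfl | hx0
          · have := h3 i (by omega) y h
            omega
          · exact hx0
        have hle : i ≤ ⟨j, hj⟩ := by
          show i.val ≤ j
          omega
        have h' := h2 i ⟨j, hj⟩ hle x y h
        apply hmin x hx
        refine ⟨hx0, Or.inl ?_⟩
        rcases Nat.lt_or_ge k y with hky | hky
        · exact (h1 _).nc 0 x k y hx0 hx hky hkk h'
        · have : y = k := by omega
          subst this
          exact (h1 _).trans _ _ _ hkk ((h1 _).symm _ _ h')
    have hik : j ≤ i.val → k < b → R i 0 k := by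
      intro hij hlt
      refine h2 ⟨j, hj⟩ i hij _ _ ?_
      rcases hk with h | h
      · exact h
      · omega
    unfold ncGlue ncRes
    constructor
    · clear hmin cross rn rp h1 h2 h3 hres hk
      grind
    · intro h
      have := cross x y
      have := cross y x
      have := rs x y h
      have := rp x y h
      have := rp y x
      clear hmin cross rn rp h1 h2 h3 hres hk
      grind

theorem NCD_rec (s j n : ℕ) (hj : j < s) : Nat.card (NCD s j (n + 1)) =
    ∑ k ∈ Finset.range (n + 1), Nat.card (NCD s (j + 1) (k + 1)) * Nat.card (NCCh s 0 (n - k)) := by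
  let F : (Σ k : Fin (n + 1), (NCD s (j + 1) (k.val + 1)) × (NCCh s (k.val + 1) (n + 1))) →
      NCD s j (n + 1) := fun q => ⟨ncGlue s j (q.1.val + 1) (n + 1) q.2.1.1 q.2.2.1,
        ncGlue_mem s j _ _ (Nat.succ_pos _) (by omega) _ _ q.2.1.2 q.2.2.2⟩
  have hF : Function.Bijective F := by
    constructor
    · rintro ⟨⟨k, hk⟩, ⟨T, hT⟩, ⟨U, hU⟩⟩ ⟨⟨k', hk'⟩, ⟨T', hT'⟩, ⟨U', hU'⟩⟩ h
      have h : ncGlue s j (k + 1) (n + 1) T U = ncGlue s j (k' + 1) (n + 1) T' U' :=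
        congrArg Subtype.val h
      have e1 := ncGlue_next s j (k + 1) (n + 1) hj (Nat.succ_pos _) T U hT hU
      have e2 := ncGlue_next s j (k' + 1) (n + 1) hj (Nat.succ_pos _) T' U' hT' hU'
      have hkk : k = k' := by
        rw [← h] at e2
        rcases Nat.lt_trichotomy k k' with hlt | heq | hlt
        · exact absurd (e1.2 (by omega)) (e2.1 _ (by omega) (by omega))
        · exact heq
        · exact absurd (e2.2 (by omega)) (e1.1 _ (by omega) (by omega))
      subst hkk
      have hTT : T = T' := by
        funext i
        rw [← ncRes_ncGlue_left s j (k + 1) (n + 1) (Nat.succ_pos _) T U hT hU i, h,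
          ncRes_ncGlue_left s j (k + 1) (n + 1) (Nat.succ_pos _) T' U' hT' hU' i]
      have hUU : U = U' := by
        funext i
        rw [← ncRes_ncGlue_right s j (k + 1) (n + 1) (Nat.succ_pos _) T U hT hU i, h,
          ncRes_ncGlue_right s j (k + 1) (n + 1) (Nat.succ_pos _) T' U' hT' hU' i]
      subst hTT hUU
      rfl
    · rintro ⟨R, hR⟩
      obtain ⟨k, hk0, hkb, hT, hg⟩ := ncGlue_surj s j (n + 1) hj (Nat.succ_pos _) R hR
      obtain ⟨k, rfl⟩ : ∃ m, k = m + 1 := ⟨k - 1, by omega⟩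
      exact ⟨⟨⟨k, by omega⟩, ⟨_, hT⟩, ⟨_, ncRes_mem s 0 (n + 1) (k + 1) (n + 1) R hR.1⟩⟩,
        Subtype.ext hg⟩
  rw [← Nat.card_congr (Equiv.ofBijective F hF), Nat.card_sigma, Finset.sum_range]
  apply Finset.sum_congr rfl
  intro k _
  rw [Nat.card_prod, ← NCCh_shift s (n - k.val) (k.val + 1)]
  have : n - k.val + (k.val + 1) = n + 1 := by omega
  rw [this]

/-- generating series -/
noncomputable def ncM (s : ℕ) : PowerSeries ℕ := PowerSeries.mk fun n => Nat.card (NCCh s 0 n)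

theorem ncD_series (s d : ℕ) (hd : d ≤ s) :
    (PowerSeries.mk fun n => Nat.card (NCD s (s - d) (n + 1))) = ncM s ^ (d + 1) := by
  induction d with
  | zero =>
    ext n
    simp only [PowerSeries.coeff_mk, ncM, Nat.sub_zero, zero_add, pow_one]
    rw [NCD_top, NCCh_shift]
  | succ d ih =>
    rw [pow_succ, ← ih (by omega)]
    ext n
    rw [PowerSeries.coeff_mul, Finset.Nat.sum_antidiagonal_eq_sum_range_succ_mk,
      PowerSeries.coeff_mk, NCD_rec s _ n (by omega)]
    have : s - (d + 1) + 1 = s - d := by omega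
    simp [ncM, this]

theorem ncM_eq (s : ℕ) : ncM s = 1 + PowerSeries.X * ncM s ^ (s + 1) := by
  rw [← ncD_series s s le_rfl]
  ext n
  cases n with
  | zero =>
    rw [map_add, PowerSeries.coeff_zero_X_mul, ncM, PowerSeries.coeff_mk, NCCh_zero]
    simp
  | succ n => 
    simp [ncM, PowerSeries.coeff_succ_X_mul, NCD_zero, PowerSeries.coeff_one]

theorem ncM_pow_rec (s n r : ℕ) : PowerSeries.coeff (n + 1) (ncM s ^ (r + 1)) =
    PowerSeries.coeff (n + 1) (ncM s ^ r) +
      PowerSeries.coeff n (ncM s ^ (r + s + 1)) := by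
  have : ncM s ^ (r + 1) = ncM s ^ r + PowerSeries.X * ncM s ^ (r + s + 1) := by
    rw [pow_succ]
    nth_rewrite 2 [ncM_eq]
    ring
  rw [this, map_add, PowerSeries.coeff_succ_X_mul]

theorem ncM_coeff_zero (s r : ℕ) : PowerSeries.coeff 0 (ncM s ^ r) = 1 := by
  have : PowerSeries.constantCoeff (ncM s) = 1 := by
    rw [ncM_eq]
    simp
  simp [this]

theorem ncM_coeff (s n r : ℕ) : ((s + 1) * n + r) * PowerSeries.coeff n (ncM s ^ r) =
    r * Nat.choose ((s + 1) * n + r) n := by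
  induction n generalizing r with
  | zero => rw [ncM_coeff_zero]; simp
  | succ n ihn =>
    induction r with
    | zero => simp [PowerSeries.coeff_one]
    | succ r ihr =>
      rw [ncM_pow_rec]
      have h2 := ihn (r + s + 1)
      generalize PowerSeries.coeff (n + 1) (ncM s ^ r) = A at *
      generalize PowerSeries.coeff n (ncM s ^ (r + s + 1)) = B at *
      have e1 : (s + 1) * n + (r + s + 1) = (s + 1) * (n + 1) + r := by ring
      rw [e1] at h2
      have e2 : (s + 1) * (n + 1) + (r + 1) = ((s + 1) * (n + 1) + r) + 1 := by ring
      rw [e2]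
      have hN : (s + 1) * (n + 1) + r = s * (n + 1) + r + n + 1 := by ring
      have hp := Nat.choose_succ_succ ((s + 1) * (n + 1) + r) n
      have hq := Nat.choose_succ_right_eq ((s + 1) * (n + 1) + r) n
      have hsub : (s + 1) * (n + 1) + r - n = s * (n + 1) + r + 1 := by omega
      rw [hsub] at hq
      simp only [Nat.succ_eq_add_one] at hp
      rw [hp]
      have hpos : 0 < (s + 1) * (n + 1) + r := by omega
      apply Nat.eq_of_mul_eq_mul_left hpos
      generalize ((s + 1) * (n + 1) + r).choose (n + 1) = P at *
      generalize ((s + 1) * (n + 1) + r).choose n = Q at *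
      zify at *
      -- N A = r P, N B = (r+s+1) Q, P (n+1) = Q (s(n+1)+r+1)
      linear_combination ((s + 1) * (n + 1) + r + 1 : ℤ) * (ihr + h2) - (s+1 : ℤ) * hq

theorem NCCh_count (s p : ℕ) :
    (s * p + 1) * Nat.card (NCCh s 0 p) = Nat.choose ((s + 1) * p) p := by
  have h := ncM_coeff s p 1
  rw [pow_one, ncM, PowerSeries.coeff_mk, one_mul] at h
  have h2 := Nat.choose_mul_succ_eq ((s + 1) * p) p
  have e : (s + 1) * p + 1 - p = s * p + 1 := by
    have : (s + 1) * p = s * p + p := by ring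
    omega
  rw [e, ← h] at h2
  apply Nat.eq_of_mul_eq_mul_left (show 0 < (s + 1) * p + 1 by omega)
  linarith

theorem fp_le_iff {p : ℕ} (P Q : Finpartition (Finset.univ : Finset (Fin p))) :
    P ≤ Q ↔ ∀ a b, a ∈ P.part b → a ∈ Q.part b := by
  constructor
  · intro h a b hab
    rw [Finpartition.mem_part_iff_exists] at *
    obtain ⟨B, hB, h1, h2⟩ := hab
    obtain ⟨C, hC, hBC⟩ := h hB
    exact ⟨C, hC, hBC h1, hBC h2⟩
  · intro h B hB
    obtain ⟨b, hb⟩ := P.nonempty_of_mem_parts hB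
    refine ⟨Q.part b, Q.part_mem.2 (Finset.mem_univ _), ?_⟩
    intro a ha
    exact h a b (P.mem_part_iff_exists.2 ⟨B, hB, ha, hb⟩)

theorem fp_nc_iff {p : ℕ} (P : Finpartition (Finset.univ : Finset (Fin p))) :
    IsNonCrossing P ↔ ∀ x y z w, x < y → y < z → z < w → x ∈ P.part z → y ∈ P.part w →
      x ∈ P.part y := by
  constructor
  · intro h x y z w l1 l2 l3 h1 h2
    by_contra hne
    rw [Finpartition.mem_part_iff_exists] at h1 h2
    obtain ⟨B, hB, hx, hz⟩ := h1
    obtain ⟨C, hC, hy, hw⟩ := h2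
    refine h ⟨x, y, z, w, B, C, hB, hC, ?_, l1, l2, l3, hx, hz, hy, hw⟩
    rintro rfl
    exact hne (P.mem_part_iff_exists.2 ⟨B, hB, hx, hy⟩)
  · rintro h ⟨x, y, z, w, B, C, hB, hC, hBC, l1, l2, l3, hx, hz, hy, hw⟩
    have h1 := h x y z w l1 l2 l3 (P.mem_part_iff_exists.2 ⟨B, hB, hx, hz⟩)
      (P.mem_part_iff_exists.2 ⟨C, hC, hy, hw⟩)
    rw [P.part_eq_of_mem hC hy] at h1
    exact hBC ((P.part_eq_of_mem hB hx).symm.trans (P.part_eq_of_mem hC h1))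

/-- The relation on `ℕ` attached to a finpartition. -/
def fpRel {p : ℕ} (P : Finpartition (Finset.univ : Finset (Fin p))) (x y : ℕ) : Prop :=
  x = y ∨ ∃ (hx : x < p) (hy : y < p), (⟨x, hx⟩ : Fin p) ∈ P.part ⟨y, hy⟩

theorem fp_symm {p : ℕ} (P : Finpartition (Finset.univ : Finset (Fin p))) {a b : Fin p}
    (h : a ∈ P.part b) : b ∈ P.part a := by
  rw [Finpartition.mem_part_iff_exists] at *
  obtain ⟨B, hB, h1, h2⟩ := h
  exact ⟨B, hB, h2, h1⟩

theorem fp_trans {p : ℕ} (P : Finpartition (Finset.univ : Finset (Fin p))) {a b c : Fin p}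
    (h : a ∈ P.part b) (h' : b ∈ P.part c) : a ∈ P.part c := by
  rw [P.mem_part_iff_part_eq_part (Finset.mem_univ _) (Finset.mem_univ _)] at *
  exact h.trans h'

theorem fpRel_val {p : ℕ} (P : Finpartition (Finset.univ : Finset (Fin p))) (a b : Fin p) :
    fpRel P a.val b.val ↔ a ∈ P.part b := by
  constructor
  · rintro (h | ⟨_, _, h⟩)
    · rw [Fin.ext h]
      exact P.mem_part (Finset.mem_univ _)
    · exact h
  · intro h
    exact Or.inr ⟨a.2, b.2, h⟩

theorem fpRel_nc {p : ℕ} (P : Finpartition (Finset.univ : Finset (Fin p)))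
    (hP : IsNonCrossing P) : NCRel 0 p (fpRel P) := by
  rw [fp_nc_iff] at hP
  refine ⟨fun x => Or.inl rfl, ?_, ?_, ?_, ?_⟩
  · rintro x y (h | ⟨hx, hy, h⟩)
    · exact Or.inl h.symm
    · exact Or.inr ⟨hy, hx, fp_symm P h⟩
  · rintro x y z (h | ⟨hx, hy, h⟩) h'
    · subst h
      exact h'
    · rcases h' with h' | ⟨hy', hz, h'⟩
      · subst h'
        exact Or.inr ⟨hx, hy, h⟩
      · exact Or.inr ⟨hx, hz, fp_trans P h h'⟩
  · rintro x y (h | ⟨hx, hy, h⟩) hne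
    · exact absurd h hne
    · exact ⟨Nat.zero_le _, hx⟩
  · rintro x y z w l1 l2 l3 (h | ⟨hx, hz, h⟩) (h' | ⟨hy, hw, h'⟩)
    · omega
    · omega
    · omega
    · exact Or.inr ⟨hx, hy, hP ⟨x, hx⟩ ⟨y, hy⟩ ⟨z, hz⟩ ⟨w, hw⟩ l1 l2 l3 h h'⟩

theorem fpRel_le {p : ℕ} (P Q : Finpartition (Finset.univ : Finset (Fin p))) :
    P ≤ Q ↔ ∀ x y, fpRel P x y → fpRel Q x y := by
  rw [fp_le_iff]
  constructor
  · rintro h x y (h' | ⟨hx, hy, h'⟩)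
    · exact Or.inl h'
    · exact Or.inr ⟨hx, hy, h _ _ h'⟩
  · intro h a b hab
    exact (fpRel_val Q a b).1 (h _ _ ((fpRel_val P a b).2 hab))

theorem fpRel_surj (p : ℕ) (r : ℕ → ℕ → Prop) (hr : NCRel 0 p r) :
    ∃ P : NCP p, fpRel P.1 = r := by
  classical
  let S : Setoid (Fin p) := ⟨fun a b => r a.val b.val,
    fun a => hr.refl _, fun h => hr.symm _ _ h, fun h h' => hr.trans _ _ _ h h'⟩
  have key : ∀ a b : Fin p, a ∈ (Finpartition.ofSetoid S).part b ↔ r a.val b.val := by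
    intro a b
    rw [Finpartition.mem_part_ofSetoid_iff_rel]
    exact ⟨fun h => hr.symm _ _ h, fun h => hr.symm _ _ h⟩
  refine ⟨⟨Finpartition.ofSetoid S, ?_⟩, ?_⟩
  · rw [fp_nc_iff]
    intro x y z w l1 l2 l3
    rw [key, key, key]
    exact hr.nc _ _ _ _ l1 l2 l3
  · ext x y
    constructor
    · rintro (h | ⟨hx, hy, h⟩)
      · subst h
        exact hr.refl _
      · exact (key _ _).1 h
    · intro h
      by_cases hxy : x = y
      · exact Or.inl hxy
      · have hx := (hr.supp _ _ h hxy).2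
        have hy := (hr.supp _ _ (hr.symm _ _ h) (Ne.symm hxy)).2
        exact Or.inr ⟨hx, hy, (key ⟨x, hx⟩ ⟨y, hy⟩).2 h⟩

theorem card_chains (p s : ℕ) :
    Nat.card {f : Fin s → NCP p // Monotone f} = Nat.card (NCCh s 0 p) := by
  let F : {f : Fin s → NCP p // Monotone f} → NCCh s 0 p := fun f =>
    ⟨fun i => fpRel (f.1 i).1, fun i => fpRel_nc _ (f.1 i).2,
      fun _ _ hij => (fpRel_le _ _).1 (f.2 hij)⟩
  refine Nat.card_congr (Equiv.ofBijective F ⟨?_, ?_⟩)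
  · rintro ⟨f, hf⟩ ⟨g, hg⟩ h
    have h : (fun i => fpRel (f i).1) = fun i => fpRel (g i).1 := congrArg Subtype.val h
    apply Subtype.ext
    funext i
    have hi : fpRel (f i).1 = fpRel (g i).1 := congrFun h i
    apply Subtype.ext
    apply le_antisymm
    · rw [fpRel_le, hi]
      exact fun _ _ h => h
    · rw [fpRel_le, hi]
      exact fun _ _ h => h
  · rintro ⟨R, h1, h2⟩
    choose f hf using fun i => fpRel_surj p (R i) (h1 i)
    refine ⟨⟨f, ?_⟩, ?_⟩
    · intro i j hij
      show (f i).1 ≤ (f j).1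
      rw [fpRel_le, hf, hf]
      exact h2 i j hij
    · apply Subtype.ext
      funext i
      exact hf i

/-- The number of `s`-multichains (weakly increasing `s`-tuples) in `NC(p)` is
`FC⁽ˢ⁾_p = choose ((s+1)p) p / (sp+1)`; in particular `FC⁽¹⁾_p` is the Catalan number and
`FC⁽ˢ⁾_1 = 1` for all `s`. -/
theorem multichain_count (p s : ℕ) (hp : 0 < p) (hs : 0 < s) :
    (s * p + 1) * Nat.card {f : Fin s → NCP p // Monotone f} = Nat.choose ((s + 1) * p) p ∧
    Nat.choose (2 * p) p = (p + 1) * catalan p ∧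
    Nat.choose ((s + 1) * 1) 1 = (s * 1 + 1) * 1 := by
  refine ⟨?_, ?_, ?_⟩
  · rw [card_chains]
    exact NCCh_count s p
  · rw [succ_mul_catalan_eq_centralBinom]
    rfl
  · simp
end
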